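/- arXiv:2412.11018 — 3 statements merged into one kernel-verified Lean document; each statement's English description precedes it below -/
import Mathlib

section
/- Let s, m, n, k, w, e be positive integers and let G be a finite simple graph that is regular of valency k and satisfies: (1) any two adjacent vertices have exactly w common neighbors; (2) any two non-adjacent vertices have at most e+1 common neighbors; (3) w > (s−1)e + ms − 1; (4) k < (s+1)(w+1) − s(s+1)e/2; (5) ms + 1 ≥ e + n; (6) e > m; (7) for every vertex x of G, the local graph N_G(x) is K̃_{m+1,n}-free. Define a line to be a maximal clique of G with at least w + 2 − (s−1)m vertices. Then every vertex of G lies on at most s lines, and any two adjacent vertices of G lie together in exactly one line. -/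
/-!
The argument takes place inside the neighbourhood `N` of a vertex `x`, where every vertex has `w`
neighbours and two non-adjacent vertices have at most `e` common neighbours.

* Inclusion-exclusion and the bound on `k` show that a coclique in `N` has at most `s` vertices
  (`coclique_card_le`).
* Freeness of `K̃_{m+1,n}` gives a dichotomy for a clique `C ⊆ N` with more than `m * s` vertices
  (`adj_all_of_many`): a vertex of `N` with more than `m` neighbours in `C` has fewer than
  `n` non-neighbours in `C`, hence more than `e` neighbours there, hence is adjacent to all other
  vertices of `C`.
* Let `I` be a coclique of `N` of maximum size. The vertices of the closed neighbourhood of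
  `i ∈ I` that lie in no other such closed neighbourhood form a clique `P i` with more than
  `m * s` vertices. A vertex of `N` with at most `m` neighbours in each `P i` could be completed
  greedily, with one vertex from each `P i`, to a coclique larger than `I`; so every vertex of `N`
  is joined to all of some `P i`. The vertices joined to all of `P i` form a maximal clique `C i`,
  and these at most `s` cliques cover `N`. The vertex `i` has at most `m` neighbours in
  each other `C j`, so `C i` has at least `w + 1 - (s - 1) m` vertices (`exists_clique_cover`).

A large maximal clique of `N` meets some `C i` in more than `m` vertices, and the dichotomy then
forces it to be equal to `C i`; so there are at most `s` lines through `x`. Two different lines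
through `x` and `y` would share at most `m` vertices of `N`, and their union would have more
vertices than the `w` common neighbours of `x` and `y` allow.
-/

open SimpleGraph

/-- `K̃_{m,n}`: the graph on `m+n+1` vertices consisting of a complete graph on the
first `m+n` vertices together with one extra vertex (the last one) adjacent to
exactly the first `m` of them. -/
def tildeK (m n : ℕ) : SimpleGraph (Fin (m + n + 1)) :=
  SimpleGraph.fromRel
    (fun i j => (i.val < m + n ∧ j.val < m + n) ∨ (i.val = m + n ∧ j.val < m))

/-- `C` is a maximal clique of `G`: a clique not properly contained in any other clique. -/
def IsMaxClique {V : Type*} (G : SimpleGraph V) (C : Finset V) : Prop :=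
  G.IsClique (C : Set V) ∧ ∀ C' : Finset V, G.IsClique (C' : Set V) → C ⊆ C' → C' = C

/-! ### The dichotomy for large cliques in a local graph -/

/-- A vertex of `N(x)` outside a clique of `N(x)` and with more than `m` neighbours in it has
fewer than `n` non-neighbours in it, by `K̃_{m+1,n}`-freeness of the local graph. -/
theorem nonneighbours_lt {V : Type*} [Fintype V] [DecidableEq V] (G : SimpleGraph V)
    [DecidableRel G.Adj] (m n : ℕ) (x : V)
    (h7 : IsEmpty (tildeK (m + 1) n ↪g (SimpleGraph.induce (G.neighborSet x) G)))
    (C : Finset V) (hCN : C ⊆ G.neighborFinset x) (hC : G.IsClique (C : Set V))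
    (z : V) (hz : z ∈ G.neighborFinset x) (hzC : z ∉ C)
    (hm : m + 1 ≤ (C ∩ G.neighborFinset z).card) :
    (C \ G.neighborFinset z).card < n := by
  by_contra! hn
  obtain ⟨A, hA, hAc⟩ := Finset.exists_subset_card_eq hm
  obtain ⟨B, hB, hBc⟩ := Finset.exists_subset_card_eq hn
  let a : Fin (m + 1) → V := fun i => ((A.equivFinOfCardEq hAc).symm i : V)
  let b : Fin n → V := fun i => ((B.equivFinOfCardEq hBc).symm i : V)
  have a_inj : ∀ i j, a i = a j ↔ i = j := by
    intro i j; simp [a, Subtype.ext_iff.symm]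
  have b_inj : ∀ i j, b i = b j ↔ i = j := by
    intro i j; simp [b, Subtype.ext_iff.symm]
  have a_mem : ∀ i, a i ∈ C ∧ G.Adj z (a i) := by
    intro i
    have := hA ((A.equivFinOfCardEq hAc).symm i).2
    simpa [a] using this
  have b_mem : ∀ i, b i ∈ C ∧ ¬ G.Adj z (b i) := by
    intro i
    have := hB ((B.equivFinOfCardEq hBc).symm i).2
    simpa [b] using this
  have ab : ∀ i j, a i ≠ b j := fun i j h => (b_mem j).2 (h ▸ (a_mem i).2)
  have az : ∀ i, a i ≠ z := fun i h => hzC (h ▸ (a_mem i).1)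
  have bz : ∀ i, b i ≠ z := fun i h => hzC (h ▸ (b_mem i).1)
  have cl : ∀ u ∈ C, ∀ v ∈ C, G.Adj u v ↔ u ≠ v := fun u hu v hv =>
    ⟨fun h => h.ne, fun h => hC hu hv h⟩
  -- `f` sends the clique of `K̃_{m+1,n}` to the neighbours `a` and the non-neighbours `b` of `z`,
  -- and the extra vertex to `z`
  let f : Fin (m + 1 + n + 1) → V := fun i =>
    if h : i.val < m + 1 then a ⟨i, h⟩
    else if h2 : i.val < m + 1 + n then b ⟨i - (m + 1), by omega⟩ else z
  have f_mem : ∀ i, f i ∈ G.neighborSet x := by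
    intro i
    rw [← Set.mem_toFinset]
    change f i ∈ G.neighborFinset x
    simp only [f]
    split_ifs with h h2
    · exact hCN (a_mem _).1
    · exact hCN (b_mem _).1
    · exact hz
  have f_inj : ∀ i j, f i = f j → i = j := by
    intro i j h
    ext
    simp only [f] at h
    split_ifs at h with h1 h2 h3 h4 h5 h6 h7 <;>
      first
      | omega
      | (exact absurd h (ab _ _))
      | (exact absurd h.symm (ab _ _))
      | (exact absurd h (az _))
      | (exact absurd h.symm (az _))
      | (exact absurd h (bz _))
      | (exact absurd h.symm (bz _))
      | (rw [a_inj, Fin.mk.injEq] at h; omega)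
      | (rw [b_inj, Fin.mk.injEq] at h; omega)
  have f_clique : ∀ i : Fin (m + 1 + n + 1), i.val < m + 1 + n → f i ∈ C := by
    intro i hi
    simp only [f]
    split_ifs
    · exact (a_mem _).1
    · exact (b_mem _).1
  have f_last : ∀ i : Fin (m + 1 + n + 1), ¬ i.val < m + 1 + n → f i = z := by
    intro i hi
    simp only [f]
    split_ifs
    · omega
    · rfl
  have f_z : ∀ i : Fin (m + 1 + n + 1), i.val < m + 1 + n →
      (G.Adj z (f i) ↔ i.val < m + 1) := by
    intro i hi
    simp only [f]
    split_ifs with h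
    · simp [h, (a_mem _).2]
    · simp [h, (b_mem _).2]
  refine h7.false ⟨⟨fun i => ⟨f i, f_mem i⟩, fun i j h => f_inj i j (congrArg Subtype.val h)⟩, ?_⟩
  intro i j
  change G.Adj (f i) (f j) ↔ _
  simp only [tildeK, SimpleGraph.fromRel_adj]
  have hne : f i ≠ f j ↔ i ≠ j := ⟨fun h h' => h (h' ▸ rfl), fun h h' => h (f_inj _ _ h')⟩
  by_cases hi : i.val < m + 1 + n <;> by_cases hj : j.val < m + 1 + n
  · rw [cl _ (f_clique i hi) _ (f_clique j hj), hne]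
    simp [hi, hj]
  · rw [f_last j hj, G.adj_comm, f_z i hi]
    have : i ≠ j := by rintro rfl; exact hj hi
    simp only [ne_eq, this, not_false_eq_true, true_and]
    omega
  · rw [f_last i hi, f_z j hj]
    have : i ≠ j := by rintro rfl; exact hi hj
    simp only [ne_eq, this, not_false_eq_true, true_and]
    omega
  · have : i = j := by ext; omega
    simp [this]

/-- In a clique of `N(x)` with more than `m * s` vertices, a vertex of `N(x)` has at most `m`
neighbours unless it is adjacent to all other vertices of the clique. -/
theorem adj_all_of_many {V : Type*} [Fintype V] [DecidableEq V] (G : SimpleGraph V)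
    [DecidableRel G.Adj] (s m n e : ℕ) (x : V)
    (hB : ∀ y ∈ G.neighborFinset x, ∀ z ∈ G.neighborFinset x, y ≠ z → ¬ G.Adj y z →
      (G.neighborFinset x ∩ (G.neighborFinset y ∩ G.neighborFinset z)).card ≤ e)
    (h5 : e + n ≤ m * s + 1)
    (h7 : IsEmpty (tildeK (m + 1) n ↪g (SimpleGraph.induce (G.neighborSet x) G)))
    (C : Finset V) (hCN : C ⊆ G.neighborFinset x) (hC : G.IsClique (C : Set V))
    (hcard : m * s + 1 ≤ C.card) (z : V) (hz : z ∈ G.neighborFinset x)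
    (hm : m + 1 ≤ (C ∩ G.neighborFinset z).card) :
    ∀ c ∈ C, c ≠ z → G.Adj z c := by
  intro c hc hcz
  by_cases hzC : z ∈ C
  · exact hC hzC hc hcz.symm
  by_contra hadj
  have h1 := nonneighbours_lt G m n x h7 C hCN hC z hz hzC hm
  have h2 := Finset.card_inter_add_card_sdiff C (G.neighborFinset z)
  have h3 := hB z hz c (hCN hc) hcz.symm hadj
  have h4 : C ∩ G.neighborFinset z ⊆
      G.neighborFinset x ∩ (G.neighborFinset z ∩ G.neighborFinset c) := by
    intro u hu
    rw [Finset.mem_inter] at hu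
    rw [Finset.mem_inter, Finset.mem_inter]
    refine ⟨hCN hu.1, hu.2, ?_⟩
    rw [SimpleGraph.mem_neighborFinset]
    refine hC hc hu.1 ?_
    rintro rfl
    exact hadj (by simpa using hu.2)
  have h6 := Finset.card_le_card h4
  omega

/-! ### Cocliques in a local graph -/

/-- The closed neighbourhood of `y` inside the vertex set `N`; it contains `y` even when
`y ∉ N`. -/
def closedNbhd {V : Type*} [Fintype V] [DecidableEq V] (G : SimpleGraph V)
    [DecidableRel G.Adj] (N : Finset V) (y : V) : Finset V :=
  insert y (N ∩ G.neighborFinset y)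

theorem mem_closedNbhd {V : Type*} [Fintype V] [DecidableEq V] (G : SimpleGraph V)
    [DecidableRel G.Adj] (N : Finset V) (y u : V) :
    u ∈ closedNbhd G N y ↔ u = y ∨ (u ∈ N ∧ G.Adj y u) := by
  simp [closedNbhd]

theorem card_closedNbhd {V : Type*} [Fintype V] [DecidableEq V] (G : SimpleGraph V)
    [DecidableRel G.Adj] (N : Finset V) (y : V) :
    (closedNbhd G N y).card = (N ∩ G.neighborFinset y).card + 1 := by
  rw [closedNbhd, Finset.card_insert_of_notMem (by simp)]

theorem card_closedNbhd_inter {V : Type*} [Fintype V] [DecidableEq V] (G : SimpleGraph V)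
    [DecidableRel G.Adj] (N : Finset V) (e : ℕ)
    (hB : ∀ y ∈ N, ∀ z ∈ N, y ≠ z → ¬ G.Adj y z →
      (N ∩ (G.neighborFinset y ∩ G.neighborFinset z)).card ≤ e)
    (y z : V) (hy : y ∈ N) (hz : z ∈ N) (hyz : y ≠ z) (hadj : ¬ G.Adj y z) :
    (closedNbhd G N y ∩ closedNbhd G N z).card ≤ e := by
  refine le_trans (Finset.card_le_card ?_) (hB y hy z hz hyz hadj)
  intro u hu
  rw [Finset.mem_inter, mem_closedNbhd, mem_closedNbhd] at hu
  have hadj' : ¬ G.Adj z y := fun h => hadj h.symm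
  simp only [Finset.mem_inter, SimpleGraph.mem_neighborFinset]
  grind

/-- Bonferroni lower bound for the union of the closed neighbourhoods of a coclique. -/
theorem coclique_bonferroni {V : Type*} [Fintype V] [DecidableEq V] (G : SimpleGraph V)
    [DecidableRel G.Adj] (N : Finset V) (w e : ℕ)
    (hA : ∀ y ∈ N, (N ∩ G.neighborFinset y).card = w)
    (hB : ∀ y ∈ N, ∀ z ∈ N, y ≠ z → ¬ G.Adj y z →
      (N ∩ (G.neighborFinset y ∩ G.neighborFinset z)).card ≤ e)
    (I : Finset V) (hIN : I ⊆ N) (hI : G.IsIndepSet (I : Set V)) :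
    I.card * (w + 1) ≤ (I.biUnion (closedNbhd G N)).card + I.card.choose 2 * e := by
  induction I using Finset.induction_on with
  | empty => simp
  | insert a J haJ ih =>
    have hJN : J ⊆ N := fun u hu => hIN (Finset.mem_insert_of_mem hu)
    have haN : a ∈ N := hIN (Finset.mem_insert_self _ _)
    have ih' := ih hJN (hI.mono (by simp))
    rw [Finset.card_insert_of_notMem haJ, Finset.biUnion_insert]
    have h1 := Finset.card_union_add_card_inter (closedNbhd G N a) (J.biUnion (closedNbhd G N))
    have h2 : (closedNbhd G N a ∩ J.biUnion (closedNbhd G N)).card ≤ J.card * e := by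
      rw [Finset.inter_biUnion]
      refine Finset.card_biUnion_le_card_mul _ _ _ fun j hj => ?_
      have hne : a ≠ j := fun h => haJ (h ▸ hj)
      exact card_closedNbhd_inter G N e hB a j haN (hJN hj) hne
        (hI (by simp) (by simp [hj]) hne)
    rw [card_closedNbhd, hA a haN] at h1
    have h3 : (J.card + 1).choose 2 = J.card + J.card.choose 2 := by
      rw [Nat.choose_succ_succ' J.card 1, Nat.choose_one_right]
    rw [h3]
    nlinarith

/-- The bound on `k` is exactly what excludes a coclique of size `s + 1`. -/
theorem coclique_card_le {V : Type*} [Fintype V] [DecidableEq V] (G : SimpleGraph V)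
    [DecidableRel G.Adj] (N : Finset V) (s w e : ℕ)
    (hA : ∀ y ∈ N, (N ∩ G.neighborFinset y).card = w)
    (hB : ∀ y ∈ N, ∀ z ∈ N, y ≠ z → ¬ G.Adj y z →
      (N ∩ (G.neighborFinset y ∩ G.neighborFinset z)).card ≤ e)
    (h4 : N.card < (s + 1) * (w + 1) - s * (s + 1) * e / 2)
    (I : Finset V) (hIN : I ⊆ N) (hI : G.IsIndepSet (I : Set V)) : I.card ≤ s := by
  by_contra! h
  obtain ⟨J, hJI, hJ⟩ := Finset.exists_subset_card_eq (Nat.succ_le_of_lt h)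
  have h1 := coclique_bonferroni G N w e hA hB J (hJI.trans hIN)
    (hI.mono (by exact_mod_cast hJI))
  have h2 : J.biUnion (closedNbhd G N) ⊆ N := by
    intro u hu
    rw [Finset.mem_biUnion] at hu
    obtain ⟨j, hj, hu⟩ := hu
    rw [mem_closedNbhd] at hu
    rcases hu with rfl | hu
    · exact hIN (hJI hj)
    · exact hu.1
  have h3 := Finset.card_le_card h2
  -- `s * (s + 1) * e` is even, so the truncating division by `2` is exact
  have h5 : s * (s + 1) * e / 2 = (s + 1).choose 2 * e := by
    have h6 : s * (s + 1) = (s + 1).choose 2 * 2 := by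
      have h7 := Nat.add_one_mul_choose_eq s 1
      simp only [Nat.choose_one_right] at h7
      linarith
    rw [h6, mul_right_comm, Nat.mul_div_cancel _ (by norm_num)]
  rw [hJ, Nat.succ_eq_add_one] at h1
  omega

/-! ### Private neighbourhoods of a maximum coclique -/

/-- The vertices of the closed neighbourhood of `i` that lie in the closed neighbourhood of no
other member of `I`. -/
def privateNbhd {V : Type*} [Fintype V] [DecidableEq V] (G : SimpleGraph V)
    [DecidableRel G.Adj] (N I : Finset V) (i : V) : Finset V :=
  closedNbhd G N i \ (I.erase i).biUnion (closedNbhd G N)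

theorem mem_privateNbhd {V : Type*} [Fintype V] [DecidableEq V] (G : SimpleGraph V)
    [DecidableRel G.Adj] (N I : Finset V) (hIN : I ⊆ N) (i : V) (hi : i ∈ I) (u : V) :
    u ∈ privateNbhd G N I i ↔
      u ∈ N ∧ (u = i ∨ G.Adj i u) ∧ ∀ j ∈ I, j ≠ i → u ≠ j ∧ ¬ G.Adj j u := by
  have := hIN hi
  simp only [privateNbhd, Finset.mem_sdiff, Finset.mem_biUnion, Finset.mem_erase, mem_closedNbhd]
  grind

theorem self_mem_privateNbhd {V : Type*} [Fintype V] [DecidableEq V] (G : SimpleGraph V)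
    [DecidableRel G.Adj] (N I : Finset V) (hIN : I ⊆ N) (hI : G.IsIndepSet (I : Set V)) :
    ∀ i ∈ I, i ∈ privateNbhd G N I i := by
  intro i hi
  rw [mem_privateNbhd G N I hIN i hi]
  exact ⟨hIN hi, Or.inl rfl, fun j hj hji => ⟨hji.symm, hI hj hi hji⟩⟩

theorem card_privateNbhd {V : Type*} [Fintype V] [DecidableEq V] (G : SimpleGraph V)
    [DecidableRel G.Adj] (N : Finset V) (w e : ℕ)
    (hA : ∀ y ∈ N, (N ∩ G.neighborFinset y).card = w)
    (hB : ∀ y ∈ N, ∀ z ∈ N, y ≠ z → ¬ G.Adj y z →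
      (N ∩ (G.neighborFinset y ∩ G.neighborFinset z)).card ≤ e)
    (I : Finset V) (hIN : I ⊆ N) (hI : G.IsIndepSet (I : Set V)) (i : V) (hi : i ∈ I) :
    w + 1 ≤ (privateNbhd G N I i).card + (I.card - 1) * e := by
  have h1 := Finset.card_inter_add_card_sdiff (closedNbhd G N i)
    ((I.erase i).biUnion (closedNbhd G N))
  have h2 : (closedNbhd G N i ∩ (I.erase i).biUnion (closedNbhd G N)).card ≤
      (I.erase i).card * e := by
    rw [Finset.inter_biUnion]
    refine Finset.card_biUnion_le_card_mul _ _ _ fun j hj => ?_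
    have hne : i ≠ j := (Finset.ne_of_mem_erase hj).symm
    have hjI := Finset.mem_of_mem_erase hj
    exact card_closedNbhd_inter G N e hB i j (hIN hi) (hIN hjI) hne (hI hi hjI hne)
  rw [Finset.card_erase_of_mem hi] at h2
  rw [card_closedNbhd, hA i (hIN hi)] at h1
  rw [privateNbhd]
  omega

/-- For a coclique `I` of maximum size, two non-adjacent vertices of `privateNbhd G N I i` could
replace `i` to give a larger coclique. -/
theorem isClique_privateNbhd {V : Type*} [Fintype V] [DecidableEq V] (G : SimpleGraph V)
    [DecidableRel G.Adj] (N : Finset V)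
    (I : Finset V) (hIN : I ⊆ N) (hI : G.IsIndepSet (I : Set V))
    (hmax : ∀ J ⊆ N, G.IsIndepSet (J : Set V) → J.card ≤ I.card) (i : V) (hi : i ∈ I) :
    G.IsClique (privateNbhd G N I i : Set V) := by
  intro u hu v hv huv
  rw [Finset.mem_coe, mem_privateNbhd G N I hIN i hi] at hu hv
  by_contra hadj
  have h1 : v ∉ I.erase i := fun h =>
    (hv.2.2 v (Finset.mem_of_mem_erase h) (Finset.ne_of_mem_erase h)).1 rfl
  have h2 : u ∉ insert v (I.erase i) := by
    rw [Finset.mem_insert, not_or]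
    exact ⟨huv, fun h =>
      (hu.2.2 u (Finset.mem_of_mem_erase h) (Finset.ne_of_mem_erase h)).1 rfl⟩
  have h3 := hmax (insert u (insert v (I.erase i))) (by
      intro a ha
      simp only [Finset.mem_insert, Finset.mem_erase] at ha
      rcases ha with rfl | rfl | ha
      exacts [hu.1, hv.1, hIN ha.2]) (by
      intro a ha b hb hab
      simp only [Finset.coe_insert, Finset.coe_erase, Set.mem_insert_iff, Set.mem_sdiff,
        Finset.mem_coe, Set.mem_singleton_iff] at ha hb
      have hII : ∀ p ∈ I, ∀ q ∈ I, p ≠ q → ¬ G.Adj p q := fun p hp q hq h => hI hp hq h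
      have hs : ∀ p q, G.Adj p q → G.Adj q p := fun p q h => h.symm
      grind)
  rw [Finset.card_insert_of_notMem h2, Finset.card_insert_of_notMem h1,
    Finset.card_erase_of_mem hi] at h3
  have := Finset.card_pos.mpr ⟨i, hi⟩
  omega

/-- Every vertex of `N` is adjacent to all other vertices of some private neighbourhood: otherwise
it has at most `m` neighbours in each of them, and one vertex of each can be chosen greedily to
build a coclique with more vertices than `I`. -/
theorem exists_joined_privateNbhd {V : Type*} [Fintype V] [DecidableEq V] (G : SimpleGraph V)
    [DecidableRel G.Adj] (N : Finset V) (s m : ℕ)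
    (hD : ∀ C ⊆ N, G.IsClique (C : Set V) → m * s + 1 ≤ C.card → ∀ z ∈ N,
      m + 1 ≤ (C ∩ G.neighborFinset z).card → ∀ c ∈ C, c ≠ z → G.Adj z c)
    (I : Finset V) (hIN : I ⊆ N) (hI : G.IsIndepSet (I : Set V))
    (hmax : ∀ J ⊆ N, G.IsIndepSet (J : Set V) → J.card ≤ I.card) (hIs : I.card ≤ s)
    (hcl : ∀ i ∈ I, G.IsClique (privateNbhd G N I i : Set V))
    (hcard : ∀ i ∈ I, m * s + 1 ≤ (privateNbhd G N I i).card) (y : V) (hy : y ∈ N) :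
    ∃ i ∈ I, ∀ c ∈ privateNbhd G N I i, c ≠ y → G.Adj y c := by
  by_contra! hno
  have hPN : ∀ i ∈ I, privateNbhd G N I i ⊆ N := fun i hi u hu =>
    ((mem_privateNbhd G N I hIN i hi u).mp hu).1
  have hiP := self_mem_privateNbhd G N I hIN hI
  have hself : ∀ i ∈ I, ∀ j ∈ I, i ≠ j → ∀ u ∈ privateNbhd G N I j, u ≠ i ∧ ¬ G.Adj u i := by
    intro i hi j hj hij u hu
    have := ((mem_privateNbhd G N I hIN j hj u).mp hu).2.2 i hi hij
    exact ⟨this.1, fun h => this.2 h.symm⟩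
  have key : ∀ J ⊆ I, ∃ Z ⊆ N, G.IsIndepSet (Z : Set V) ∧ Z.card = J.card + 1 ∧
      ∀ z ∈ Z, z = y ∨ ∃ j ∈ J, z ∈ privateNbhd G N I j := by
    intro J
    induction J using Finset.induction_on with
    | empty =>
      intro _
      exact ⟨{y}, by simpa using hy, by simp, by simp, by simp⟩
    | insert i J hiJ ih =>
      intro hJI
      have hi : i ∈ I := hJI (Finset.mem_insert_self _ _)
      have hJI' : J ⊆ I := fun u hu => hJI (Finset.mem_insert_of_mem hu)
      obtain ⟨Z, hZN, hZ, hZc, hZJ⟩ := ih hJI'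
      -- a vertex of another `P j` misses `i` itself, and `y` misses something by assumption
      have hbad : ∀ z ∈ Z, ∃ c ∈ privateNbhd G N I i, c ≠ z ∧ ¬ G.Adj z c := by
        intro z hz
        rcases hZJ z hz with rfl | ⟨j, hj, hzj⟩
        · exact hno i hi
        · have hij : i ≠ j := fun h => hiJ (h ▸ hj)
          have h1 := hself i hi j (hJI' hj) hij z hzj
          exact ⟨i, hiP i hi, h1.1.symm, h1.2⟩
      have hfew : ∀ z ∈ Z, (privateNbhd G N I i ∩ G.neighborFinset z).card ≤ m := by
        intro z hz
        by_contra! h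
        obtain ⟨c, hc, hcz, hadj⟩ := hbad z hz
        exact hadj (hD _ (hPN i hi) (hcl i hi) (hcard i hi) z (hZN hz) h c hc hcz)
      have hnot : ∀ z ∈ Z, z ∉ privateNbhd G N I i := by
        intro z hz hzP
        obtain ⟨c, hc, hcz, hadj⟩ := hbad z hz
        exact hadj (hcl i hi hzP hc hcz.symm)
      have hsum : (Z.biUnion fun z => privateNbhd G N I i ∩ G.neighborFinset z).card ≤ Z.card * m :=
        Finset.card_biUnion_le_card_mul _ _ _ hfew
      have hJlt : J.card + 1 ≤ s := by
        have := Finset.card_le_card hJI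
        rw [Finset.card_insert_of_notMem hiJ] at this
        omega
      have hlt : (Z.biUnion fun z => privateNbhd G N I i ∩ G.neighborFinset z).card <
          (privateNbhd G N I i).card := by
        have := hcard i hi
        rw [hZc] at hsum
        nlinarith
      obtain ⟨p, hp, hpZ⟩ := Finset.exists_mem_notMem_of_card_lt_card hlt
      have hpadj : ∀ z ∈ Z, ¬ G.Adj z p := by
        intro z hz h
        exact hpZ (Finset.mem_biUnion.mpr ⟨z, hz, by simp [hp, h]⟩)
      have hpnot : p ∉ Z := fun h => hnot p h hp
      refine ⟨insert p Z, Finset.insert_subset (hPN i hi hp) hZN, ?_, ?_, ?_⟩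
      · rw [Finset.coe_insert]
        intro a ha b hb hab
        rcases ha with rfl | ha <;> rcases hb with rfl | hb
        · exact absurd rfl hab
        · exact fun h => hpadj b hb h.symm
        · exact hpadj a ha
        · exact hZ ha hb hab
      · rw [Finset.card_insert_of_notMem hpnot, Finset.card_insert_of_notMem hiJ, hZc]
      · intro z hz
        rcases Finset.mem_insert.mp hz with rfl | hz
        · exact Or.inr ⟨i, Finset.mem_insert_self _ _, hp⟩
        · rcases hZJ z hz with h | ⟨j, hj, h⟩
          · exact Or.inl h
          · exact Or.inr ⟨j, Finset.mem_insert_of_mem hj, h⟩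
  obtain ⟨Z, hZN, hZ, hZc, -⟩ := key I subset_rfl
  have := hmax Z hZN hZ
  omega

/-! ### The clique cover of a local graph -/

/-- `N` is covered by at most `s` maximal cliques, each with at least `w + 1 - (s - 1) m`
vertices. -/
theorem exists_clique_cover {V : Type*} [Fintype V] [DecidableEq V] (G : SimpleGraph V)
    [DecidableRel G.Adj] (N : Finset V) (s m w e : ℕ)
    (hA : ∀ y ∈ N, (N ∩ G.neighborFinset y).card = w)
    (hB : ∀ y ∈ N, ∀ z ∈ N, y ≠ z → ¬ G.Adj y z →
      (N ∩ (G.neighborFinset y ∩ G.neighborFinset z)).card ≤ e)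
    (hD : ∀ C ⊆ N, G.IsClique (C : Set V) → m * s + 1 ≤ C.card → ∀ z ∈ N,
      m + 1 ≤ (C ∩ G.neighborFinset z).card → ∀ c ∈ C, c ≠ z → G.Adj z c)
    (h3 : (s - 1) * e + m * s ≤ w)
    (h4 : N.card < (s + 1) * (w + 1) - s * (s + 1) * e / 2)
    (h5 : e ≤ m * s) :
    ∃ 𝒞 : Finset (Finset V), 𝒞.card ≤ s ∧ (∀ y ∈ N, ∃ C ∈ 𝒞, y ∈ C) ∧
      ∀ C ∈ 𝒞, C ⊆ N ∧ G.IsClique (C : Set V) ∧ w + 1 ≤ C.card + (s - 1) * m ∧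
        m * s + 1 ≤ C.card ∧ ∀ z ∈ N, (∀ c ∈ C, c ≠ z → G.Adj z c) → z ∈ C := by
  classical
  obtain ⟨I, hImem, hImax⟩ := Finset.exists_max_image
    (N.powerset.filter fun J : Finset V => G.IsIndepSet (J : Set V)) Finset.card ⟨∅, by simp⟩
  simp only [Finset.mem_filter, Finset.mem_powerset] at hImem hImax
  obtain ⟨hIN, hI⟩ := hImem
  have hmax : ∀ J ⊆ N, G.IsIndepSet (J : Set V) → J.card ≤ I.card := fun J h h' =>
    hImax J ⟨h, h'⟩
  have hIs := coclique_card_le G N s w e hA hB h4 I hIN hI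
  have hcl := isClique_privateNbhd G N I hIN hI hmax
  have hcard : ∀ i ∈ I, m * s + 1 ≤ (privateNbhd G N I i).card := by
    intro i hi
    have h6 := card_privateNbhd G N w e hA hB I hIN hI i hi
    have h7 : (I.card - 1) * e ≤ (s - 1) * e := Nat.mul_le_mul_right _ (by omega)
    omega
  have hjoin := exists_joined_privateNbhd G N s m hD I hIN hI hmax hIs hcl hcard
  have hPN : ∀ i ∈ I, privateNbhd G N I i ⊆ N := fun i hi u hu =>
    ((mem_privateNbhd G N I hIN i hi u).mp hu).1
  have hiP := self_mem_privateNbhd G N I hIN hI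
  let C : V → Finset V := fun i =>
    N.filter fun z => ∀ c ∈ privateNbhd G N I i, c ≠ z → G.Adj z c
  have memC : ∀ i z, z ∈ C i ↔ z ∈ N ∧ ∀ c ∈ privateNbhd G N I i, c ≠ z → G.Adj z c := by
    intro i z; simp [C]
  have hPC : ∀ i ∈ I, privateNbhd G N I i ⊆ C i := by
    intro i hi u hu
    rw [memC]
    exact ⟨hPN i hi hu, fun c hc hcu => hcl i hi hu hc hcu.symm⟩
  have hCN : ∀ i, C i ⊆ N := fun i => Finset.filter_subset _ _
  have hCcard : ∀ i ∈ I, m * s + 1 ≤ (C i).card := fun i hi =>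
    (hcard i hi).trans (Finset.card_le_card (hPC i hi))
  -- two vertices joined to all of `P i` have too many common neighbours to be non-adjacent
  have hCcl : ∀ i ∈ I, G.IsClique (C i : Set V) := by
    intro i hi u hu v hv huv
    rw [Finset.mem_coe, memC] at hu hv
    by_contra hadj
    have hadj' : ¬ G.Adj v u := fun h => hadj h.symm
    have h6 := hB u hu.1 v hv.1 huv hadj
    have h7 : privateNbhd G N I i ⊆ N ∩ (G.neighborFinset u ∩ G.neighborFinset v) := by
      intro c hc
      have hcu : c ≠ u := by
        rintro rfl
        exact hadj' (hv.2 c hc huv)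
      have hcv : c ≠ v := by
        rintro rfl
        exact hadj (hu.2 c hc huv.symm)
      simp [hPN i hi hc, hu.2 c hc hcu, hv.2 c hc hcv]
    have h8 := Finset.card_le_card h7
    have h9 := hcard i hi
    omega
  have hCmax : ∀ i ∈ I, ∀ z ∈ N, (∀ c ∈ C i, c ≠ z → G.Adj z c) → z ∈ C i := by
    intro i hi z hz h
    rw [memC]
    exact ⟨hz, fun c hc => h c (hPC i hi hc)⟩
  -- count the closed neighbourhood of `i` along the cliques `C j`
  have hsize : ∀ i ∈ I, w + 1 ≤ (C i).card + (s - 1) * m := by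
    intro i hi
    have hsub : closedNbhd G N i ⊆
        C i ∪ (I.erase i).biUnion fun j => C j ∩ G.neighborFinset i := by
      intro u hu
      have hu' : u ∈ N ∧ (u ≠ i → G.Adj i u) := by
        rw [mem_closedNbhd] at hu
        rcases hu with rfl | hu
        · exact ⟨hIN hi, fun h => absurd rfl h⟩
        · exact ⟨hu.1, fun _ => hu.2⟩
      by_cases hui : u ∈ C i
      · exact Finset.mem_union_left _ hui
      have hne : u ≠ i := by
        rintro rfl
        exact hui (hPC u hi (hiP u hi))
      obtain ⟨j, hj, hju⟩ := hjoin u hu'.1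
      have huj : u ∈ C j := (memC j u).mpr ⟨hu'.1, hju⟩
      have hji : j ≠ i := by
        rintro rfl
        exact hui huj
      refine Finset.mem_union_right _ (Finset.mem_biUnion.mpr
        ⟨j, Finset.mem_erase.mpr ⟨hji, hj⟩, ?_⟩)
      simp [huj, hu'.2 hne]
    have hfew : ∀ j ∈ I.erase i, (C j ∩ G.neighborFinset i).card ≤ m := by
      intro j hj
      have hji := Finset.ne_of_mem_erase hj
      have hjI := Finset.mem_of_mem_erase hj
      by_contra! h
      exact hI hi hjI hji.symm
        (hD _ (hCN j) (hCcl j hjI) (hCcard j hjI) i (hIN hi) h j (hPC j hjI (hiP j hjI)) hji)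
    have h6 := Finset.card_le_card hsub
    have h7 := Finset.card_union_le (C i)
      ((I.erase i).biUnion fun j => C j ∩ G.neighborFinset i)
    have h8 := Finset.card_biUnion_le_card_mul _ _ _ hfew
    rw [Finset.card_erase_of_mem hi] at h8
    rw [card_closedNbhd, hA i (hIN hi)] at h6
    have h9 : (I.card - 1) * m ≤ (s - 1) * m := Nat.mul_le_mul_right _ (by omega)
    omega
  refine ⟨I.image C, Finset.card_image_le.trans hIs, ?_, ?_⟩
  · intro y hy
    obtain ⟨i, hi, h⟩ := hjoin y hy
    exact ⟨C i, Finset.mem_image_of_mem _ hi, (memC i y).mpr ⟨hy, h⟩⟩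
  · intro D hDmem
    obtain ⟨i, hi, rfl⟩ := Finset.mem_image.mp hDmem
    exact ⟨hCN i, hCcl i hi, hsize i hi, hCcard i hi, hCmax i hi⟩

/-! ### Lines through a vertex -/

/-- Removing `x` from a maximal clique through `x` leaves a maximal clique of `N(x)`. -/
theorem erase_of_isMaxClique {V : Type*} [Fintype V] [DecidableEq V] (G : SimpleGraph V)
    [DecidableRel G.Adj] (x : V) (L : Finset V) (hL : IsMaxClique G L) (hx : x ∈ L) :
    L.erase x ⊆ G.neighborFinset x ∧ G.IsClique (L.erase x : Set V) ∧
      ∀ z ∈ G.neighborFinset x, (∀ c ∈ L.erase x, c ≠ z → G.Adj z c) → z ∈ L.erase x := by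
  refine ⟨?_, hL.1.subset (by exact_mod_cast Finset.erase_subset x L), ?_⟩
  · intro u hu
    rw [SimpleGraph.mem_neighborFinset]
    exact hL.1 hx (Finset.mem_of_mem_erase hu) (Finset.ne_of_mem_erase hu).symm
  · intro z hz h
    rw [SimpleGraph.mem_neighborFinset] at hz
    rw [Finset.mem_erase]
    refine ⟨hz.ne', ?_⟩
    have h1 := hL.2 (insert z L) (by
      rw [Finset.coe_insert, SimpleGraph.isClique_insert]
      refine ⟨hL.1, fun c hc hne => ?_⟩
      by_cases hcx : c = x
      · exact hcx ▸ hz.symm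
      · exact h c (Finset.mem_erase.mpr ⟨hcx, hc⟩) hne.symm) (Finset.subset_insert _ _)
    rw [← h1]
    exact Finset.mem_insert_self _ _

/-- Converse of `erase_of_isMaxClique`. -/
theorem isMaxClique_insert {V : Type*} [Fintype V] [DecidableEq V] (G : SimpleGraph V)
    [DecidableRel G.Adj] (x : V) (C : Finset V) (hCN : C ⊆ G.neighborFinset x)
    (hC : G.IsClique (C : Set V))
    (hmax : ∀ z ∈ G.neighborFinset x, (∀ c ∈ C, c ≠ z → G.Adj z c) → z ∈ C) :
    IsMaxClique G (insert x C) := by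
  refine ⟨?_, ?_⟩
  · rw [Finset.coe_insert, SimpleGraph.isClique_insert]
    exact ⟨hC, fun c hc _ => by simpa using hCN hc⟩
  · intro D hD hsub
    refine Finset.Subset.antisymm ?_ hsub
    intro z hz
    rw [Finset.mem_insert]
    by_cases hzx : z = x
    · exact Or.inl hzx
    refine Or.inr (hmax z ?_ fun c hc hcz => ?_)
    · rw [SimpleGraph.mem_neighborFinset]
      exact hD (hsub (Finset.mem_insert_self _ _)) hz (Ne.symm hzx)
    · exact hD hz (hsub (Finset.mem_insert_of_mem hc)) hcz.symm

/-- If more than `m` vertices of a clique `D ⊆ N` lie in a maximal clique `C` of `N`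
with more than `m * s` vertices, then the dichotomy forces `D ⊆ C`. -/
theorem subset_of_large_inter {V : Type*} [Fintype V] [DecidableEq V] (G : SimpleGraph V)
    [DecidableRel G.Adj] (N : Finset V) (s m : ℕ)
    (hD : ∀ C ⊆ N, G.IsClique (C : Set V) → m * s + 1 ≤ C.card → ∀ z ∈ N,
      m + 1 ≤ (C ∩ G.neighborFinset z).card → ∀ c ∈ C, c ≠ z → G.Adj z c)
    (C D : Finset V) (hCN : C ⊆ N) (hC : G.IsClique (C : Set V)) (hcard : m * s + 1 ≤ C.card)
    (hmax : ∀ z ∈ N, (∀ c ∈ C, c ≠ z → G.Adj z c) → z ∈ C)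
    (hDN : D ⊆ N) (hDc : G.IsClique (D : Set V)) (hint : m + 1 ≤ (D ∩ C).card) : D ⊆ C := by
  intro d hd
  by_contra hdC
  refine hdC (hmax d (hDN hd) (hD C hCN hC hcard d (hDN hd) (hint.trans (Finset.card_le_card ?_))))
  intro u hu
  rw [Finset.mem_inter] at hu
  rw [Finset.mem_inter, SimpleGraph.mem_neighborFinset]
  exact ⟨hu.2, hDc hd hu.1 (by rintro rfl; exact hdC hu.2)⟩

/-- improved Bose–Laskar argument, Theorem `pls2`.
Defining a line to be a maximal clique with at least `w + 2 - (s-1)m` vertices: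
every vertex lies on at most `s` lines, and any two adjacent vertices lie together
in exactly one line. -/
theorem improved_bose_laskar
    {V : Type*} [Fintype V] [DecidableEq V] (G : SimpleGraph V) [DecidableRel G.Adj]
    (s m n k w e : ℕ)
    (hs : 1 ≤ s) (hm : 1 ≤ m) (hn : 1 ≤ n) (hk : 1 ≤ k) (hw : 1 ≤ w) (he : 1 ≤ e)
    (hreg : G.IsRegularOfDegree k)
    (h1 : ∀ x y : V, G.Adj x y → (G.neighborFinset x ∩ G.neighborFinset y).card = w)
    (h2 : ∀ x y : V, x ≠ y → ¬ G.Adj x y →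
      (G.neighborFinset x ∩ G.neighborFinset y).card ≤ e + 1)
    (h3 : (s - 1) * e + m * s - 1 < w)
    (h4 : k < (s + 1) * (w + 1) - s * (s + 1) * e / 2)
    (h5 : e + n ≤ m * s + 1)
    (h6 : m < e)
    (h7 : ∀ x : V, IsEmpty (tildeK (m + 1) n ↪g (SimpleGraph.induce (G.neighborSet x) G))) :
    (∀ x : V,
      {C : Finset V | (IsMaxClique G C ∧ w + 2 - (s - 1) * m ≤ C.card) ∧ x ∈ C}.ncard ≤ s) ∧
    (∀ x y : V, G.Adj x y → ∃! C : Finset V,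
      (IsMaxClique G C ∧ w + 2 - (s - 1) * m ≤ C.card) ∧ x ∈ C ∧ y ∈ C) := by
  have hms : 1 ≤ m * s := Nat.mul_pos hm hs
  have h3' : (s - 1) * e + m * s ≤ w := by omega
  have h5' : e ≤ m * s := by omega
  have hsm : (s - 1) * m + m = m * s := by
    obtain ⟨t, rfl⟩ := Nat.exists_eq_add_of_le' hs
    simp only [Nat.add_sub_cancel]
    ring
  have hse : (s - 1) * m + (s - 1) ≤ (s - 1) * e := by
    calc (s - 1) * m + (s - 1) = (s - 1) * (m + 1) := by ring
      _ ≤ (s - 1) * e := Nat.mul_le_mul_left _ h6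
  have hA : ∀ x : V, ∀ y ∈ G.neighborFinset x,
      (G.neighborFinset x ∩ G.neighborFinset y).card = w := by
    intro x y hy
    exact h1 x y (by simpa using hy)
  -- inside `N(x)` the common neighbour `x` is not counted
  have hB : ∀ x : V, ∀ y ∈ G.neighborFinset x, ∀ z ∈ G.neighborFinset x, y ≠ z → ¬ G.Adj y z →
      (G.neighborFinset x ∩ (G.neighborFinset y ∩ G.neighborFinset z)).card ≤ e := by
    intro x y hy z hz hyz hadj
    rw [SimpleGraph.mem_neighborFinset] at hy hz
    have h8 := h2 y z hyz hadj
    have hx : x ∈ G.neighborFinset y ∩ G.neighborFinset z := by simp [hy.symm, hz.symm]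
    have h9 : G.neighborFinset x ∩ (G.neighborFinset y ∩ G.neighborFinset z) ⊆
        (G.neighborFinset y ∩ G.neighborFinset z).erase x := by
      intro u hu
      rw [Finset.mem_inter, SimpleGraph.mem_neighborFinset] at hu
      exact Finset.mem_erase.mpr ⟨hu.1.ne', hu.2⟩
    have h10 := Finset.card_le_card h9
    rw [Finset.card_erase_of_mem hx] at h10
    omega
  have hD := fun x => adj_all_of_many G s m n e x (hB x) h5 (h7 x)
  have hcover := fun x => exists_clique_cover G (G.neighborFinset x) s m w e (hA x) (hB x) (hD x)
    h3' (by rw [G.card_neighborFinset_eq_degree, hreg x]; exact h4) h5'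
  have hlarge : ∀ x : V, ∀ L : Finset V, w + 2 - (s - 1) * m ≤ L.card → x ∈ L →
      w + 1 ≤ (L.erase x).card + (s - 1) * m ∧ m * s + 1 ≤ (L.erase x).card := by
    intro x L hL hx
    rw [Finset.card_erase_of_mem hx]
    have := Finset.card_pos.mpr ⟨x, hx⟩
    omega
  refine ⟨fun x => ?_, fun x y hxy => ?_⟩
  · obtain ⟨𝒞, h𝒞, hcov, hmem⟩ := hcover x
    refine le_trans ?_ h𝒞
    rw [← Set.ncard_coe_finset 𝒞]
    refine Set.ncard_le_ncard_of_injOn (fun L => L.erase x) ?_ ?_ 𝒞.finite_toSet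
    · rintro L ⟨⟨hL, hLc⟩, hx⟩
      obtain ⟨hDN, hDc, hDm⟩ := erase_of_isMaxClique G x L hL hx
      have hDl := hlarge x L hLc hx
      -- pigeonhole: some member of the cover contains more than `m` vertices of the line
      obtain ⟨C, hC, hint⟩ : ∃ C ∈ 𝒞, m + 1 ≤ (L.erase x ∩ C).card := by
        by_contra! h
        have h8 : L.erase x ⊆ 𝒞.biUnion fun C => L.erase x ∩ C := by
          intro u hu
          obtain ⟨C, hC, huC⟩ := hcov u (hDN hu)
          exact Finset.mem_biUnion.mpr ⟨C, hC, Finset.mem_inter.mpr ⟨hu, huC⟩⟩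
        have h9 := Finset.card_le_card h8
        have h10 := Finset.card_biUnion_le_card_mul 𝒞 (fun C => L.erase x ∩ C) m
          fun C hC => Nat.lt_succ_iff.mp (h C hC)
        have h11 : 𝒞.card * m ≤ m * s := by
          rw [mul_comm]
          exact Nat.mul_le_mul_left _ h𝒞
        omega
      obtain ⟨hCN, hCc, -, hCl, hCm⟩ := hmem C hC
      have hsub := subset_of_large_inter G _ s m (hD x) C (L.erase x) hCN hCc hCl hCm hDN hDc hint
      have hsub' : C ⊆ L.erase x := fun c hc =>
        hDm c (hCN hc) fun d hd hdc => hCc hc (hsub hd) hdc.symm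
      have heq : L.erase x = C := Finset.Subset.antisymm hsub hsub'
      simpa only [heq, Finset.mem_coe] using hC
    · rintro L ⟨-, hx⟩ L' ⟨-, hx'⟩ h
      have h8 : L.erase x = L'.erase x := h
      rw [← Finset.insert_erase hx, ← Finset.insert_erase hx', h8]
  · have hyN : y ∈ G.neighborFinset x := by simpa using hxy
    obtain ⟨𝒞, -, hcov, hmem⟩ := hcover x
    obtain ⟨C, hC, hyC⟩ := hcov y hyN
    obtain ⟨hCN, hCc, hCs, -, hCm⟩ := hmem C hC
    refine existsUnique_of_exists_of_unique ⟨insert x C,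
      ⟨isMaxClique_insert G x C hCN hCc hCm, ?_⟩, Finset.mem_insert_self _ _,
      Finset.mem_insert_of_mem hyC⟩ ?_
    · have hxC : x ∉ C := fun h => by simpa using hCN h
      rw [Finset.card_insert_of_notMem hxC]
      omega
    · rintro L L' ⟨⟨hL, hLc⟩, hx, hy⟩ ⟨⟨hL', hLc'⟩, hx', hy'⟩
      obtain ⟨hN, hc, hmx⟩ := erase_of_isMaxClique G x L hL hx
      obtain ⟨hN', hc', hmx'⟩ := erase_of_isMaxClique G x L' hL' hx'
      have hl := hlarge x L hLc hx
      have hl' := hlarge x L' hLc' hx'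
      have hyx : y ≠ x := hxy.ne'
      have hsubB : ∀ D : Finset V, D ⊆ G.neighborFinset x → G.IsClique (D : Set V) → y ∈ D →
          D ⊆ closedNbhd G (G.neighborFinset x) y := by
        intro D hDN hDc hyD u hu
        rw [mem_closedNbhd]
        by_cases huy : u = y
        · exact Or.inl huy
        · exact Or.inr ⟨hDN hu, hDc hyD hu (Ne.symm huy)⟩
      have hunion := Finset.card_le_card (Finset.union_subset
        (hsubB _ hN hc (Finset.mem_erase.mpr ⟨hyx, hy⟩))
        (hsubB _ hN' hc' (Finset.mem_erase.mpr ⟨hyx, hy'⟩)))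
      rw [card_closedNbhd, hA x y hyN] at hunion
      have hie := Finset.card_union_add_card_inter (L.erase x) (L'.erase x)
      -- `w + 1 ≥ (2 * s - 1) * m + s` makes the union too big for a small intersection
      have hint : m + 1 ≤ (L.erase x ∩ L'.erase x).card := by omega
      have hsub := subset_of_large_inter G _ s m (hD x) _ _ hN' hc' hl'.2 hmx' hN hc hint
      have hsub' := subset_of_large_inter G _ s m (hD x) _ _ hN hc hl.2 hmx hN' hc'
        (by rwa [Finset.inter_comm])
      rw [← Finset.insert_erase hx, ← Finset.insert_erase hx', Finset.Subset.antisymm hsub hsub']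
end

section
/- Let s, k, w, e be positive integers and let G be a finite simple graph that is regular of valency k and satisfies: (1) any two adjacent vertices have exactly w common neighbors; (2) any two non-adjacent vertices have at most e+1 common neighbors; (3) w > (2s−1)e − 1; (4) k < (s+1)(w+1) − s(s+1)e/2. Define a line to be a maximal clique of G with at least w + 2 − (s−1)e vertices. Then every vertex of G lies on at most s lines, and any two adjacent vertices of G lie together in exactly one line. -/
/-!
Everything rests on a bound for claws. A claw at `x` is an independent set `T` of neighbours of `x`.
Each `y ∈ T` has `w` common neighbours with `x`, and two members of `T` share at most `e` neighbours
inside `N(x)` (the vertex `x` itself uses up one of their `e + 1` common neighbours). Counting the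
closed neighbourhoods of the members of `T` inside `N(x)` (`claw_count`) shows, with the bound on
`k`, that claws have at most `s` vertices.

*Existence* (`exists_large_clique`). For adjacent `x, y` extend `{y}` to a maximal claw `{y} ∪ T`
at `x`, so `|T| ≤ s - 1`. Let `A` be the set of vertices of `N(x)` that equal or are adjacent to `y`
and have no neighbour in `T`. Each member of `T` excludes at most `e` vertices, so
`|A| ≥ w + 1 - (s - 1) e`. If `A` contained two non-adjacent vertices `z, z'`, then, by maximality,
the neighbours of `z` (or `z'`) in `N(x)` having no neighbour in `T` would be adjacent or equal
to `y`. This gives two sets of size at least `w - (s - 1) e`, with at most `e` vertices in common,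
inside a set of size `w - 1`, contradicting `w ≥ (2 s - 1) e`. Hence `A ∪ {x}` is a clique, and it
extends to a line.

*Uniqueness* (`large_clique_unique`). Two different lines meet in at most `e + 1` vertices, while
two lines through `x` and `y` both lie in `{x, y} ∪ (N(x) ∩ N(y))`, which has only `w + 2` vertices.

*Number of lines* (`exists_transversal_claw`). Given `s + 1` lines on `x`, one picks greedily a
vertex other than `x` on each, pairwise non-adjacent: a vertex off a line through `x` has at most
`e` neighbours on it besides `x`, so at most `s e` of the at least `s e + 1` candidates are lost.
The result is a claw of size `s + 1`, which is impossible.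
-/


open SimpleGraph

section Helpers

/-- A vertex outside a maximal clique is non-adjacent to some member of it. -/
lemma IsMaxClique.exists_not_adj {V : Type*} [DecidableEq V] {G : SimpleGraph V}
    {C : Finset V} (hC : IsMaxClique G C)
    {z : V} (hz : z ∉ C) : ∃ u ∈ C, ¬ G.Adj z u := by
  by_contra! h
  have := hC.2 (insert z C)
    (by
      rw [Finset.coe_insert]
      exact hC.1.insert fun u hu _ => h u hu)
    (Finset.subset_insert z C)
  exact hz (this ▸ Finset.mem_insert_self z C)

variable {V : Type*} [Fintype V] [DecidableEq V] {G : SimpleGraph V} [DecidableRel G.Adj]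

/-! ### Claws -/

/-- If every vertex of `T` has at most `e` neighbours in `A`, then discarding from `A` all the
neighbours of members of `T` costs at most `|T| e` vertices. -/
lemma card_le_card_avoid {e : ℕ} (A T : Finset V)
    (h : ∀ z ∈ T, (A ∩ G.neighborFinset z).card ≤ e) :
    A.card ≤ (A.filter fun u => ∀ z ∈ T, ¬ G.Adj z u).card + T.card * e := by
  have hsub : A ⊆ (A.filter fun u => ∀ z ∈ T, ¬ G.Adj z u) ∪
      T.biUnion fun z => A ∩ G.neighborFinset z := by
    intro u hu
    by_cases hh : ∀ z ∈ T, ¬ G.Adj z u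
    · simp only [Finset.mem_union, Finset.mem_filter]
      exact Or.inl ⟨hu, hh⟩
    · push Not at hh
      obtain ⟨z, hz, hzu⟩ := hh
      simp only [Finset.mem_union, Finset.mem_biUnion, Finset.mem_inter, mem_neighborFinset]
      exact Or.inr ⟨z, hz, hu, hzu⟩
  calc A.card ≤ _ := Finset.card_le_card hsub
    _ ≤ _ := Finset.card_union_le _ _
    _ ≤ _ := Nat.add_le_add_left (Finset.card_biUnion_le_card_mul _ _ _ h) _

/-- Two non-adjacent neighbours of `x` have at most `e` common neighbours inside `N(x)`, because
`x` is one of their at most `e + 1` common neighbours. -/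
lemma card_common_le {e : ℕ}
    (h2 : ∀ x y : V, x ≠ y → ¬ G.Adj x y →
      (G.neighborFinset x ∩ G.neighborFinset y).card ≤ e + 1)
    {x a b : V} (ha : G.Adj x a) (hb : G.Adj x b) (hab : a ≠ b) (hn : ¬ G.Adj a b)
    {S : Finset V} (hx : x ∉ S) (hSa : ∀ u ∈ S, G.Adj a u) (hSb : ∀ u ∈ S, G.Adj b u) :
    S.card ≤ e := by
  have hsub : insert x S ⊆ G.neighborFinset a ∩ G.neighborFinset b := by
    intro u hu
    simp only [Finset.mem_inter, mem_neighborFinset]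
    rcases Finset.mem_insert.1 hu with rfl | hu
    · exact ⟨ha.symm, hb.symm⟩
    · exact ⟨hSa u hu, hSb u hu⟩
  have h := (Finset.card_le_card hsub).trans (h2 a b hab hn)
  rw [Finset.card_insert_of_notMem hx] at h
  omega

/-- Bonferroni bound for the closed neighbourhoods, inside `N(x)`, of the members of a claw `T`
at `x`. With `t = |T|` it reads `t (w + 1) - t (t - 1) e / 2 ≤ |⋃ ...|`, doubled and rearranged
so as to avoid subtraction and division. -/
lemma claw_count {w e : ℕ}
    (h1 : ∀ x y : V, G.Adj x y → (G.neighborFinset x ∩ G.neighborFinset y).card = w)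
    (h2 : ∀ x y : V, x ≠ y → ¬ G.Adj x y →
      (G.neighborFinset x ∩ G.neighborFinset y).card ≤ e + 1)
    (x : V) (T : Finset V) (hT : ∀ a ∈ T, G.Adj x a) (hi : ∀ a ∈ T, ∀ b ∈ T, ¬ G.Adj a b) :
    2 * (T.card * (w + 1)) + T.card * e ≤
      2 * (T.biUnion fun a => insert a (G.neighborFinset x ∩ G.neighborFinset a)).card +
        T.card * T.card * e := by
  induction T using Finset.induction_on with
  | empty => simp
  | insert a T haT ih =>
    have ih' := ih (fun b hb => hT b (Finset.mem_insert_of_mem hb))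
      (fun b hb c hc => hi b (Finset.mem_insert_of_mem hb) c (Finset.mem_insert_of_mem hc))
    rw [Finset.biUnion_insert, Finset.card_insert_of_notMem haT]
    set U := T.biUnion fun a => insert a (G.neighborFinset x ∩ G.neighborFinset a) with hU
    set B := insert a (G.neighborFinset x ∩ G.neighborFinset a) with hB
    have hBc : B.card = w + 1 := by
      rw [hB, Finset.card_insert_of_notMem (by simp), h1 x a (hT a (by simp))]
    have hBU : (B ∩ U).card ≤ T.card * e := by
      rw [hU, Finset.inter_biUnion]
      refine Finset.card_biUnion_le_card_mul _ _ _ fun b hb => ?_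
      have hab : a ≠ b := fun h => haT (h ▸ hb)
      have hn : ¬ G.Adj a b := hi a (by simp) b (Finset.mem_insert_of_mem hb)
      have hxa := hT a (by simp)
      have hxb := hT b (Finset.mem_insert_of_mem hb)
      refine card_common_le h2 hxa hxb hab hn ?_ ?_ ?_
      · simp [hB, hxa.ne]
      · intro u hu
        simp only [hB, Finset.mem_inter, Finset.mem_insert, mem_neighborFinset] at hu
        rcases hu with ⟨rfl | hu, rfl | hu'⟩
        · exact absurd rfl hab
        · exact absurd hu'.2.symm hn
        · exact hu.2
        · exact hu.2
      · intro u hu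
        simp only [hB, Finset.mem_inter, Finset.mem_insert, mem_neighborFinset] at hu
        rcases hu with ⟨rfl | hu, rfl | hu'⟩
        · exact absurd rfl hab
        · exact hu'.2
        · exact absurd hu.2 hn
        · exact hu'.2
    have hc := Finset.card_union_add_card_inter B U
    nlinarith

/-- Claws have at most `m + 1` vertices. The hypothesis `h4` is the bound on the valency for
`s = m + 1`, doubled. -/
lemma claw_card_le {k w e m : ℕ} (hreg : G.IsRegularOfDegree k)
    (h1 : ∀ x y : V, G.Adj x y → (G.neighborFinset x ∩ G.neighborFinset y).card = w)
    (h2 : ∀ x y : V, x ≠ y → ¬ G.Adj x y →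
      (G.neighborFinset x ∩ G.neighborFinset y).card ≤ e + 1)
    (h4 : 2 * k + (m + 1) * (m + 2) * e < 2 * ((m + 2) * (w + 1)))
    (x : V) (T : Finset V) (hT : ∀ a ∈ T, G.Adj x a) (hi : ∀ a ∈ T, ∀ b ∈ T, ¬ G.Adj a b) :
    T.card ≤ m + 1 := by
  by_contra hcon
  obtain ⟨S, hST, hS⟩ := Finset.exists_subset_card_eq (show m + 2 ≤ T.card by omega)
  have hc := claw_count h1 h2 x S (fun a ha => hT a (hST ha))
    (fun a ha b hb => hi a (hST ha) b (hST hb))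
  have hk : (S.biUnion fun a => insert a (G.neighborFinset x ∩ G.neighborFinset a)).card ≤ k := by
    rw [← hreg x, ← card_neighborFinset_eq_degree]
    refine Finset.card_le_card (Finset.biUnion_subset.2 fun a ha => ?_)
    refine Finset.insert_subset ?_ Finset.inter_subset_left
    simpa using hT a (hST ha)
  rw [hS] at hc
  nlinarith

/-! ### Existence of lines -/

/-- Adjacent vertices lie in a common clique that is large enough to become a line; `s = m + 1`. -/
lemma exists_large_clique {w e m : ℕ}
    (h1 : ∀ x y : V, G.Adj x y → (G.neighborFinset x ∩ G.neighborFinset y).card = w)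
    (h2 : ∀ x y : V, x ≠ y → ¬ G.Adj x y →
      (G.neighborFinset x ∩ G.neighborFinset y).card ≤ e + 1)
    (h3 : (2 * m + 1) * e ≤ w)
    (hclaw : ∀ (x : V) (T : Finset V), (∀ a ∈ T, G.Adj x a) →
      (∀ a ∈ T, ∀ b ∈ T, ¬ G.Adj a b) → T.card ≤ m + 1)
    {x y : V} (hxy : G.Adj x y) :
    ∃ C : Finset V, G.IsClique (C : Set V) ∧ w + 2 ≤ C.card + m * e ∧ x ∈ C ∧ y ∈ C := by
  -- `{y} ∪ T` is a claw at `x`, maximal under inclusion.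
  obtain ⟨T, -, hTmax⟩ := Finite.exists_le_maximal (a := (∅ : Finset V))
    (p := fun T : Finset V => (∀ z ∈ T, G.Adj x z ∧ z ≠ y ∧ ¬ G.Adj y z) ∧
      ∀ a ∈ T, ∀ b ∈ T, ¬ G.Adj a b) (by simp)
  obtain ⟨⟨hT, hi⟩, hmax⟩ := hTmax
  have hTm : T.card ≤ m := by
    have h := hclaw x (insert y T)
      (by
        intro a ha
        rcases Finset.mem_insert.1 ha with rfl | ha
        · exact hxy
        · exact (hT a ha).1)
      (by
        intro a ha b hb
        rcases Finset.mem_insert.1 ha with rfl | ha' <;>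
          rcases Finset.mem_insert.1 hb with rfl | hb'
        · exact G.irrefl
        · exact (hT b hb').2.2
        · exact fun h => (hT a ha').2.2 h.symm
        · exact hi a ha' b hb')
    rw [Finset.card_insert_of_notMem (fun h => (hT y h).2.1 rfl)] at h
    omega
  have hTe : T.card * e ≤ m * e := Nat.mul_le_mul_right e hTm
  have hext : ∀ u, G.Adj x u → u ∉ T → (∀ z ∈ T, ¬ G.Adj z u) → u = y ∨ G.Adj y u := by
    intro u hxu huT hu
    by_contra hcon
    push Not at hcon
    refine huT (hmax (y := insert u T) ⟨?_, ?_⟩ (Finset.subset_insert u T)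
      (Finset.mem_insert_self u T))
    · intro z hz
      rcases Finset.mem_insert.1 hz with rfl | hz
      · exact ⟨hxu, hcon⟩
      · exact hT z hz
    · intro a ha b hb
      rcases Finset.mem_insert.1 ha with rfl | ha' <;>
        rcases Finset.mem_insert.1 hb with rfl | hb'
      · exact G.irrefl
      · exact fun h => hu b hb' h.symm
      · exact hu a ha'
      · exact hi a ha' b hb'
  set D := G.neighborFinset x ∩ G.neighborFinset y with hD
  have hyD : y ∉ D := by simp [hD]
  have hDc : D.card = w := h1 x y hxy
  set A := (insert y D).filter fun u => ∀ z ∈ T, ¬ G.Adj z u with hA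
  have hAc : w + 1 ≤ A.card + T.card * e := by
    have h := card_le_card_avoid (G := G) (e := e) (insert y D) T (by
      intro z hz
      obtain ⟨hxz, hzy, hyz⟩ := hT z hz
      refine card_common_le h2 hxy hxz hzy.symm hyz (by simp [hD, hxy.ne]) ?_ ?_
      · intro u hu
        simp only [hD, Finset.mem_inter, Finset.mem_insert, mem_neighborFinset] at hu
        rcases hu with ⟨rfl | hu, hzu⟩
        · exact absurd hzu.symm hyz
        · exact hu.2
      · intro u hu
        simpa using (Finset.mem_inter.1 hu).2)
    rwa [Finset.card_insert_of_notMem hyD, hDc] at h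
  have hyA : y ∈ A := by
    simp only [hA, Finset.mem_filter, Finset.mem_insert_self, true_and]
    exact fun z hz h => (hT z hz).2.2 h.symm
  have hxA : ∀ z ∈ A, G.Adj x z := by
    intro z hz
    simp only [hA, hD, Finset.mem_filter, Finset.mem_insert, Finset.mem_inter,
      mem_neighborFinset] at hz
    rcases hz.1 with rfl | h
    · exact hxy
    · exact h.1
  have hyz : ∀ z ∈ A, z ≠ y → z ∈ D := by
    intro z hz hzy
    exact (Finset.mem_insert.1 (Finset.mem_filter.1 hz).1).resolve_left hzy
  have hzT : ∀ z ∈ A, z ∉ T := by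
    intro z hz hzT
    obtain ⟨-, hzy, hn⟩ := hT z hzT
    have := hyz z hz hzy
    simp only [hD, Finset.mem_inter, mem_neighborFinset] at this
    exact hn this.2
  have hAT : ∀ z ∈ A, ∀ t ∈ T, ¬ G.Adj t z := fun z hz => (Finset.mem_filter.1 hz).2
  -- The neighbours of `z` in `N(x)` without neighbour in `T`, for `z ∈ A`.
  let B : V → Finset V := fun z =>
    (G.neighborFinset x ∩ G.neighborFinset z).filter fun u => ∀ t ∈ T, ¬ G.Adj t u
  have hBc : ∀ z ∈ A, w ≤ (B z).card + T.card * e := by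
    intro z hz
    rw [← h1 x z (hxA z hz)]
    refine card_le_card_avoid _ _ fun t ht => ?_
    refine card_common_le h2 (hxA z hz) (hT t ht).1 (fun h => hzT z hz (h ▸ ht))
      (fun h => hAT z hz t ht h.symm) (by simp) ?_ ?_
    · intro u hu
      simp only [Finset.mem_inter, mem_neighborFinset] at hu
      exact hu.1.2
    · intro u hu
      simp only [Finset.mem_inter, mem_neighborFinset] at hu
      exact hu.2
  have hBD : ∀ z ∈ A, ∀ u ∈ B z, G.Adj z u ∧ (u = y ∨ u ∈ D) := by
    intro z hz u hu
    simp only [B, Finset.mem_filter, Finset.mem_inter, mem_neighborFinset] at hu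
    obtain ⟨⟨hxu, hzu⟩, huT⟩ := hu
    refine ⟨hzu, (hext u hxu (fun h => hAT z hz u h hzu.symm) huT).imp_right fun h => ?_⟩
    simp only [hD, Finset.mem_inter, mem_neighborFinset]
    exact ⟨hxu, h⟩
  have hAcl : G.IsClique (A : Set V) := by
    intro z hz z' hz' hne
    by_contra hn
    have hz : z ∈ A := hz
    have hz' : z' ∈ A := hz'
    have hzy : z ≠ y := by
      rintro rfl
      have := hyz z' hz' hne.symm
      simp only [hD, Finset.mem_inter, mem_neighborFinset] at this
      exact hn this.2
    have hzy' : z' ≠ y := by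
      rintro rfl
      have := hyz z hz hne
      simp only [hD, Finset.mem_inter, mem_neighborFinset] at this
      exact hn this.2.symm
    have hzD := hyz z hz hzy
    have hzD' := hyz z' hz' hzy'
    have hI : (B z ∩ B z').card ≤ e := by
      refine card_common_le h2 (hxA z hz) (hxA z' hz') hne hn (by simp [B]) ?_ ?_
      · exact fun u hu => (hBD z hz u (Finset.mem_inter.1 hu).1).1
      · exact fun u hu => (hBD z' hz' u (Finset.mem_inter.1 hu).2).1
    have hsub : B z ∪ B z' ⊆ insert y ((D.erase z).erase z') := by
      intro u hu
      have hu' : (G.Adj z u ∨ G.Adj z' u) ∧ (u = y ∨ u ∈ D) := by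
        rcases Finset.mem_union.1 hu with h | h
        · exact ⟨Or.inl (hBD z hz u h).1, (hBD z hz u h).2⟩
        · exact ⟨Or.inr (hBD z' hz' u h).1, (hBD z' hz' u h).2⟩
      obtain ⟨hadj, huD⟩ := hu'
      simp only [Finset.mem_insert, Finset.mem_erase]
      refine huD.imp_right fun h => ⟨?_, ?_, h⟩
      · rintro rfl
        exact hadj.elim hn G.irrefl
      · rintro rfl
        exact hadj.elim G.irrefl fun h => hn h.symm
    have hU := (Finset.card_le_card hsub).trans (Finset.card_insert_le _ _)
    have hc1 := Finset.card_erase_add_one hzD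
    have hc2 := Finset.card_erase_add_one
      (show z' ∈ D.erase z from Finset.mem_erase.2 ⟨hne.symm, hzD'⟩)
    have hc := Finset.card_union_add_card_inter (B z) (B z')
    have hb := hBc z hz
    have hb' := hBc z' hz'
    nlinarith
  refine ⟨insert x A, ?_, ?_, by simp, Finset.mem_insert_of_mem hyA⟩
  · rw [Finset.coe_insert]
    exact hAcl.insert fun z hz _ => hxA z hz
  · rw [Finset.card_insert_of_notMem (fun h => G.irrefl (hxA x h))]
    omega

/-! ### Uniqueness of lines -/

/-- Two adjacent vertices lie in at most one line; `s = m + 1`. -/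
lemma large_clique_unique {w e m : ℕ}
    (h1 : ∀ x y : V, G.Adj x y → (G.neighborFinset x ∩ G.neighborFinset y).card = w)
    (h2 : ∀ x y : V, x ≠ y → ¬ G.Adj x y →
      (G.neighborFinset x ∩ G.neighborFinset y).card ≤ e + 1)
    (h3 : (2 * m + 1) * e ≤ w)
    {x y : V} (hxy : G.Adj x y) {C C' : Finset V} (hC : IsMaxClique G C) (hC' : IsMaxClique G C')
    (hc : w + 2 ≤ C.card + m * e) (hc' : w + 2 ≤ C'.card + m * e)
    (hx : x ∈ C) (hy : y ∈ C) (hx' : x ∈ C') (hy' : y ∈ C') : C = C' := by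
  by_contra hne
  have hnot : ¬ C ⊆ C' := fun h => hne (hC.2 C' hC'.1 h).symm
  obtain ⟨z, hz, hz'⟩ := Finset.not_subset.1 hnot
  obtain ⟨u, hu, hzu⟩ := hC'.exists_not_adj hz'
  have hzune : z ≠ u := fun h => hz' (h ▸ hu)
  have huC : u ∉ C := fun h => hzu (hC.1 hz h hzune)
  have hI : (C ∩ C').card ≤ e + 1 := by
    refine (Finset.card_le_card fun v hv => ?_).trans (h2 z u hzune hzu)
    obtain ⟨hv, hv'⟩ := Finset.mem_inter.1 hv
    simp only [Finset.mem_inter, mem_neighborFinset]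
    exact ⟨hC.1 hz hv fun h => hz' (h ▸ hv'), hC'.1 hu hv' fun h => huC (h ▸ hv)⟩
  have hU : (C ∪ C').card ≤ w + 2 := by
    have hsub : C ∪ C' ⊆ insert x (insert y (G.neighborFinset x ∩ G.neighborFinset y)) := by
      intro v hv
      simp only [Finset.mem_insert, Finset.mem_inter, mem_neighborFinset]
      by_cases hvx : v = x
      · exact Or.inl hvx
      by_cases hvy : v = y
      · exact Or.inr (Or.inl hvy)
      refine Or.inr (Or.inr ?_)
      rcases Finset.mem_union.1 hv with h | h
      · exact ⟨hC.1 hx h (Ne.symm hvx), hC.1 hy h (Ne.symm hvy)⟩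
      · exact ⟨hC'.1 hx' h (Ne.symm hvx), hC'.1 hy' h (Ne.symm hvy)⟩
    have ha := Finset.card_le_card hsub
    have hb := Finset.card_insert_le x (insert y (G.neighborFinset x ∩ G.neighborFinset y))
    have hd := Finset.card_insert_le y (G.neighborFinset x ∩ G.neighborFinset y)
    have := h1 x y hxy
    omega
  have hcard := Finset.card_union_add_card_inter C C'
  nlinarith

/-! ### Lines through a vertex -/

/-- Given at most `s + 1 = m + 2` lines through `x`, there is a claw at `x` of the same cardinality
whose members lie on these lines. -/
lemma exists_transversal_claw {w e m : ℕ}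
    (h1 : ∀ x y : V, G.Adj x y → (G.neighborFinset x ∩ G.neighborFinset y).card = w)
    (h2 : ∀ x y : V, x ≠ y → ¬ G.Adj x y →
      (G.neighborFinset x ∩ G.neighborFinset y).card ≤ e + 1)
    (h3 : (2 * m + 1) * e ≤ w) (x : V) (L : Finset (Finset V))
    (hL : ∀ C ∈ L, IsMaxClique G C ∧ w + 2 ≤ C.card + m * e ∧ x ∈ C) (hLc : L.card ≤ m + 2) :
    ∃ T : Finset V, T.card = L.card ∧ (∀ a ∈ T, G.Adj x a ∧ ∃ C ∈ L, a ∈ C) ∧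
      ∀ a ∈ T, ∀ b ∈ T, ¬ G.Adj a b := by
  induction L using Finset.induction_on with
  | empty => exact ⟨∅, by simp⟩
  | insert C L hCL ih =>
    rw [Finset.card_insert_of_notMem hCL] at hLc
    obtain ⟨T, hTc, hT, hi⟩ := ih (fun C' h => hL C' (Finset.mem_insert_of_mem h)) (by omega)
    obtain ⟨hC, hCc, hxC⟩ := hL C (Finset.mem_insert_self C L)
    have hTC : ∀ a ∈ T, a ∉ C := by
      intro a ha haC
      obtain ⟨hxa, C', hC'L, haC'⟩ := hT a ha
      obtain ⟨hC', hC'c, hxC'⟩ := hL C' (Finset.mem_insert_of_mem hC'L)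
      have := large_clique_unique h1 h2 h3 hxa hC hC' hCc hC'c hxC haC hxC' haC'
      exact hCL (this ▸ hC'L)
    have hxz : ∀ z ∈ C.erase x, G.Adj x z := fun z hz =>
      hC.1 hxC (Finset.mem_of_mem_erase hz) (Finset.ne_of_mem_erase hz).symm
    have hav := card_le_card_avoid (G := G) (e := e) (C.erase x) T (by
      intro a ha
      obtain ⟨u, hu, hau⟩ := hC.exists_not_adj (hTC a ha)
      have hxa := (hT a ha).1
      have hux : u ≠ x := by
        rintro rfl
        exact hau hxa.symm
      refine card_common_le h2 hxa (hxz u (Finset.mem_erase.2 ⟨hux, hu⟩))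
        (fun h => hTC a ha (h ▸ hu)) hau (by simp) ?_ ?_
      · intro v hv
        simpa using (Finset.mem_inter.1 hv).2
      · intro v hv
        obtain ⟨hv, hav⟩ := Finset.mem_inter.1 hv
        refine hC.1 hu (Finset.mem_of_mem_erase hv) ?_
        rintro rfl
        exact hau (by simpa using hav))
    have hpos : 0 < ((C.erase x).filter fun u => ∀ z ∈ T, ¬ G.Adj z u).card := by
      have hcx := Finset.card_erase_add_one hxC
      have : T.card * e ≤ (m + 1) * e := Nat.mul_le_mul_right e (by omega)
      nlinarith
    obtain ⟨z, hz⟩ := Finset.card_pos.1 hpos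
    obtain ⟨hz, hzT⟩ := Finset.mem_filter.1 hz
    have hzC := Finset.mem_of_mem_erase hz
    refine ⟨insert z T, ?_, ?_, ?_⟩
    · rw [Finset.card_insert_of_notMem (fun h => hTC z h hzC), Finset.card_insert_of_notMem hCL, hTc]
    · intro a ha
      rcases Finset.mem_insert.1 ha with rfl | ha
      · exact ⟨hxz a hz, C, Finset.mem_insert_self C L, hzC⟩
      · obtain ⟨hxa, C', hC', haC'⟩ := hT a ha
        exact ⟨hxa, C', Finset.mem_insert_of_mem hC', haC'⟩
    · intro a ha b hb
      rcases Finset.mem_insert.1 ha with rfl | ha' <;>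
        rcases Finset.mem_insert.1 hb with rfl | hb'
      · exact G.irrefl
      · exact fun h => hzT b hb' h.symm
      · exact hzT a ha'
      · exact hi a ha' b hb'

end Helpers

/-! ### The Bose–Laskar type theorem -/

/-- Metsch's Bose–Laskar type theorem.
Defining a line to be a maximal clique with at least `w + 2 - (s-1)e` vertices:
every vertex lies on at most `s` lines, and any two adjacent vertices lie together
in exactly one line. -/
theorem metsch_bose_laskar
    {V : Type*} [Fintype V] [DecidableEq V] (G : SimpleGraph V) [DecidableRel G.Adj]
    (s k w e : ℕ)
    (hs : 1 ≤ s) (hk : 1 ≤ k) (hw : 1 ≤ w) (he : 1 ≤ e)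
    (hreg : G.IsRegularOfDegree k)
    (h1 : ∀ x y : V, G.Adj x y → (G.neighborFinset x ∩ G.neighborFinset y).card = w)
    (h2 : ∀ x y : V, x ≠ y → ¬ G.Adj x y →
      (G.neighborFinset x ∩ G.neighborFinset y).card ≤ e + 1)
    (h3 : (2 * s - 1) * e - 1 < w)
    (h4 : k < (s + 1) * (w + 1) - s * (s + 1) * e / 2) :
    (∀ x : V,
      {C : Finset V | (IsMaxClique G C ∧ w + 2 - (s - 1) * e ≤ C.card) ∧ x ∈ C}.ncard ≤ s) ∧
    (∀ x y : V, G.Adj x y → ∃! C : Finset V,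
      (IsMaxClique G C ∧ w + 2 - (s - 1) * e ≤ C.card) ∧ x ∈ C ∧ y ∈ C) := by
  obtain ⟨m, rfl⟩ : ∃ m, s = m + 1 := ⟨s - 1, by omega⟩
  have h3' : (2 * m + 1) * e ≤ w := by
    rw [show 2 * (m + 1) - 1 = 2 * m + 1 by omega] at h3
    omega
  have h4' : 2 * k + (m + 1) * (m + 2) * e < 2 * ((m + 2) * (w + 1)) := by
    have hev : 2 ∣ (m + 1) * (m + 1 + 1) * e :=
      (Nat.even_mul_succ_self (m + 1)).two_dvd.mul_right e
    have hd := Nat.mul_div_cancel' hev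
    have e1 : (m + 1) * (m + 1 + 1) * e = (m + 1) * (m + 2) * e := rfl
    have e2 : (m + 1 + 1) * (w + 1) = (m + 2) * (w + 1) := rfl
    omega
  have hsize : ∀ C : Finset V,
      w + 2 - (m + 1 - 1) * e ≤ C.card ↔ w + 2 ≤ C.card + m * e := by
    intro C
    rw [Nat.add_sub_cancel]
    omega
  simp only [hsize]
  have hclaw := claw_card_le hreg h1 h2 h4'
  refine ⟨fun x => ?_, fun x y hxy => ?_⟩
  · by_contra! hcon
    obtain ⟨L, hLs, hLc⟩ := Set.exists_subset_card_eq (Nat.succ_le_of_lt hcon)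
    have hfin : L.Finite := Set.toFinite L
    have hLc' : hfin.toFinset.card = m + 2 := by
      rw [← Set.ncard_eq_toFinset_card L hfin, hLc]
    obtain ⟨T, hTc, hT, hi⟩ := exists_transversal_claw h1 h2 h3' x hfin.toFinset
      (fun C hC => by
        obtain ⟨⟨a, b⟩, c⟩ := hLs (hfin.mem_toFinset.1 hC)
        exact ⟨a, b, c⟩) hLc'.le
    have := hclaw x T (fun a ha => (hT a ha).1) hi
    omega
  · obtain ⟨C₀, hC₀, hc₀, hx₀, hy₀⟩ := exists_large_clique h1 h2 h3' hclaw hxy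
    obtain ⟨C, hle, hC⟩ := Finite.exists_le_maximal (a := C₀)
      (p := fun C : Finset V => G.IsClique (C : Set V)) hC₀
    have hCmax : IsMaxClique G C :=
      ⟨hC.prop, fun C' hC' h => (hC.eq_of_le hC' h).symm⟩
    have hcC : w + 2 ≤ C.card + m * e := hc₀.trans (by
      have := Finset.card_le_card hle
      omega)
    refine ⟨C, ⟨⟨hCmax, hcC⟩, hle hx₀, hle hy₀⟩, ?_⟩
    rintro C' ⟨⟨hC', hc'⟩, hx', hy'⟩
    exact large_clique_unique h1 h2 h3' hxy hC' hCmax hc' hcC hx' hy' (hle hx₀) (hle hy₀)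
end

section
/- Let G be a distance-regular graph of diameter D ≥ 3 with distinct adjacency eigenvalues θ₀ > θ₁ > … > θ_D and intersection number b₁. Then for every vertex x of G, the smallest adjacency eigenvalue of the local graph N_G(x) satisfies λ_min(N_G(x)) ≥ −b₁/(θ₁ + 1) − 1. -/
/-!
The proof is Terwilliger's argument. All powers of the adjacency matrix `A` of a distance-regular
graph, hence all polynomials in `A`, have entries depending only on the distance
(`distConst_aeval`). Take `q = ∏_{i ≠ 1} (X - θ_i)` and `E = q(A)²`, a nonzero multiple of the
projection onto the `θ₁`-eigenspace. Then `E` is positive semidefinite, `A E = θ₁ E`, and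
`E y z = m (dist y z)`. Comparing entries of `A E = θ₁ E` at distances `0` and `1` determines
`m 1` and `m 2` in terms of `m 0 > 0`.

Let `f` be an eigenvector of the local graph at `x`, with eigenvalue `μ`. The local graph is regular
of valency `a₁ = k - 1 - b₁`, so either `μ = a₁ ≥ 0`, and the bound is clear, or `∑ f = 0`. In the
latter case two distinct neighbours of `x` are at distance `1` or `2`, and
`fᵀ E f ≥ 0` becomes `(m 0 - m 2) + μ (m 1 - m 2) ≥ 0`, which after substituting for `m 1`, `m 2`
and cancelling `k - θ₁ > 0` is the asserted inequality.

Both cases need `θ₁ > -1`. In fact `θ₁ ≥ 0`: for nonadjacent `u ≠ v`, the vector `e_u - e_v` is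
orthogonal to the constant vectors, which form the eigenspace of `θ₀ = k`, while the quadratic form
of `A` vanishes on it (`exists_eigenvalue_nonneg`).
-/

open SimpleGraph Matrix

open Classical in
/-- The real adjacency matrix of a simple graph. -/
noncomputable def adjMat {V : Type*} [Fintype V] (G : SimpleGraph V) : Matrix V V ℝ :=
  Matrix.of fun x y => if G.Adj x y then (1 : ℝ) else 0

/-- `μ` is an eigenvalue of the (real) adjacency matrix of `G`. -/
def HasAdjEigenvalue {V : Type*} [Fintype V] (G : SimpleGraph V) (μ : ℝ) : Prop :=
  ∃ f : V → ℝ, f ≠ 0 ∧ adjMat G *ᵥ f = μ • f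

lemma adjMat_eq_adjMatrix {V : Type*} [Fintype V] (G : SimpleGraph V) [DecidableRel G.Adj] :
    adjMat G = G.adjMatrix ℝ := by
  ext x y
  simp [adjMat, SimpleGraph.adjMatrix_apply]

lemma adjMat_isHermitian {V : Type*} [Fintype V] (G : SimpleGraph V) :
    (adjMat G).IsHermitian := by
  classical
  rw [adjMat_eq_adjMatrix]
  exact G.isHermitian_adjMatrix ℝ

lemma adjMat_nonneg {V : Type*} [Fintype V] (G : SimpleGraph V) (x y : V) : 0 ≤ adjMat G x y := by
  classical
  rw [adjMat_eq_adjMatrix, SimpleGraph.adjMatrix_apply]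
  split_ifs <;> norm_num

/-! ### Spectral preliminaries -/

lemma matrix_eq_zero_of_mulVec_eigenvectorBasis {V : Type*} [Fintype V] [DecidableEq V]
    {A : Matrix V V ℝ} (hA : A.IsHermitian) (M : Matrix V V ℝ)
    (h : ∀ j, M *ᵥ (hA.eigenvectorBasis j : V → ℝ) = 0) : M = 0 := by
  have h1 : Matrix.toEuclideanLin M = 0 := by
    apply hA.eigenvectorBasis.toBasis.ext
    intro j
    simp [Matrix.toLpLin_apply, h j]
  simpa using h1

lemma aeval_mulVec_of_eigenvector {V : Type*} [Fintype V] [DecidableEq V]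
    {A : Matrix V V ℝ} {v : V → ℝ} {t : ℝ} (h : A *ᵥ v = t • v) (p : Polynomial ℝ) :
    Polynomial.aeval A p *ᵥ v = p.eval t • v := by
  induction p using Polynomial.induction_on' with
  | add p q hp hq => simp [Matrix.add_mulVec, hp, hq, add_smul]
  | monomial n a =>
    have hn : (A ^ n) *ᵥ v = t ^ n • v := by
      induction n with
      | zero => simp
      | succ n ih =>
        rw [pow_succ, ← Matrix.mulVec_mulVec, h, Matrix.mulVec_smul, ih, smul_smul, pow_succ,
          mul_comm]
    rw [Polynomial.aeval_monomial, ← Algebra.smul_def, Matrix.smul_mulVec, hn, smul_smul,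
      Polynomial.eval_monomial]

/-- In a `k`-regular graph the Laplacian is `k • 1 - A`. -/
lemma lapMatrix_mulVec_of_regular {V : Type*} [Fintype V] [DecidableEq V] (G : SimpleGraph V)
    [DecidableRel G.Adj] {k : ℝ} (hk : ∀ y, ∑ w, adjMat G y w = k) (v : V → ℝ) :
    G.lapMatrix ℝ *ᵥ v = k • v - adjMat G *ᵥ v := by
  ext y
  have : (G.degree y : ℝ) = k := by
    rw [← hk y, adjMat_eq_adjMatrix, G.degree_eq_sum_if_adj]
    simp [SimpleGraph.adjMatrix_apply]
  rw [SimpleGraph.lapMatrix_mulVec_apply, this, adjMat_eq_adjMatrix, Pi.sub_apply,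
    SimpleGraph.adjMatrix_mulVec_apply]
  simp

lemma eigenvalue_le_of_regular {V : Type*} [Fintype V] (G : SimpleGraph V) {k : ℝ}
    (hk : ∀ y, ∑ w, adjMat G y w = k) {t : ℝ} (ht : HasAdjEigenvalue G t) : t ≤ k := by
  classical
  obtain ⟨v, hv, h⟩ := ht
  have h1 := (G.posSemidef_lapMatrix ℝ).dotProduct_mulVec_nonneg v
  rw [lapMatrix_mulVec_of_regular G hk, h, ← sub_smul, dotProduct_smul, smul_eq_mul] at h1
  have h2 : 0 < star v ⬝ᵥ v := by
    simpa using dotProduct_star_self_pos_iff.2 hv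
  nlinarith

lemma eigenvector_const_of_regular {V : Type*} [Fintype V] (G : SimpleGraph V)
    (hconn : G.Connected) {k : ℝ} (hk : ∀ y, ∑ w, adjMat G y w = k) {v : V → ℝ}
    (h : adjMat G *ᵥ v = k • v) (x y : V) : v x = v y := by
  classical
  have h1 : G.lapMatrix ℝ *ᵥ v = 0 := by
    rw [lapMatrix_mulVec_of_regular G hk, h, sub_self]
  exact G.lapMatrix_mulVec_eq_zero_iff_forall_reachable.1 h1 x y (hconn x y)

/-- A connected `k`-regular graph with two distinct nonadjacent vertices has a nonnegative
eigenvalue other than `k`. -/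
lemma exists_eigenvalue_nonneg {V : Type*} [Fintype V] (G : SimpleGraph V)
    (hconn : G.Connected) {k : ℝ} (hk : ∀ y, ∑ w, adjMat G y w = k) {u v : V} (huv : u ≠ v)
    (hadj : ¬ G.Adj u v) : ∃ t, HasAdjEigenvalue G t ∧ t ≠ k ∧ 0 ≤ t := by
  classical
  by_contra! hcon
  have hA := adjMat_isHermitian G
  set B := hA.eigenvectorBasis with hB
  set lam := hA.eigenvalues with hlam
  have hev : ∀ j, adjMat G *ᵥ (B j : V → ℝ) = lam j • (B j : V → ℝ) :=
    fun j => hA.mulVec_eigenvectorBasis j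
  have hBne : ∀ j, (B j : V → ℝ) ≠ 0 := by
    intro j h0
    apply B.toBasis.ne_zero j
    ext i
    simpa using congrFun h0 i
  let f : V → ℝ := Pi.single u 1 - Pi.single v 1
  have hfdot : ∀ g : V → ℝ, f ⬝ᵥ g = g u - g v := by
    intro g
    simp [f, sub_dotProduct]
  have hform : f ⬝ᵥ (adjMat G *ᵥ f) = 0 := by
    rw [hfdot]
    have hvu : ¬ G.Adj v u := fun h => hadj h.symm
    simp [f, Matrix.mulVec_sub, adjMat, hadj, hvu]
  let F : EuclideanSpace ℝ V := WithLp.toLp 2 f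
  have hinner : ∀ j, inner ℝ (B j) F = f ⬝ᵥ (B j : V → ℝ) := by
    intro j
    simp [F, EuclideanSpace.inner_eq_star_dotProduct]
  have hFs : F = ∑ j, (f ⬝ᵥ (B j : V → ℝ)) • B j := by
    conv_lhs => rw [← B.sum_repr' F]
    simp [hinner]
  have hfs : f = ∑ j, (f ⬝ᵥ (B j : V → ℝ)) • (B j : V → ℝ) := by
    have := congrArg (fun z : EuclideanSpace ℝ V => (z : V → ℝ)) hFs
    simpa [F] using this
  have hform2 : f ⬝ᵥ (adjMat G *ᵥ f) = ∑ j, lam j * (f ⬝ᵥ (B j : V → ℝ)) ^ 2 := by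
    have hAf : adjMat G *ᵥ f
        = ∑ j, adjMat G *ᵥ ((f ⬝ᵥ (B j : V → ℝ)) • (B j : V → ℝ)) := by
      rw [← Matrix.mulVec_sum, ← hfs]
    rw [hAf, dotProduct_sum]
    refine Finset.sum_congr rfl fun j _ => ?_
    rw [Matrix.mulVec_smul, hev, dotProduct_smul, dotProduct_smul]
    simp only [smul_eq_mul]
    ring
  have hcase : ∀ j, f ⬝ᵥ (B j : V → ℝ) = 0 ∨ lam j < 0 := by
    intro j
    by_cases hj : lam j = k
    · left
      rw [hfdot, eigenvector_const_of_regular G hconn hk (v := B j) (by rw [hev j, hj]) u v,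
        sub_self]
    · exact Or.inr (hcon _ ⟨_, hBne j, hev j⟩ hj)
  have hnonpos : ∀ j ∈ Finset.univ, lam j * (f ⬝ᵥ (B j : V → ℝ)) ^ 2 ≤ 0 := by
    intro j _
    rcases hcase j with h | h
    · simp [h]
    · exact mul_nonpos_of_nonpos_of_nonneg h.le (sq_nonneg _)
  have hz := (Finset.sum_eq_zero_iff_of_nonpos hnonpos).1 (hform2 ▸ hform)
  have hz' : ∀ j, f ⬝ᵥ (B j : V → ℝ) = 0 := by
    intro j
    rcases hcase j with h | h
    · exact h
    · have := hz j (Finset.mem_univ _)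
      rcases mul_eq_zero.1 this with h' | h'
      · exact absurd h' h.ne
      · exact pow_eq_zero_iff (two_ne_zero) |>.1 h'
  have hf0 : f = 0 := by
    rw [hfs]; simp [hz']
  have := congrFun hf0 u
  simp [f, huv] at this

/-! ### Matrices constant on distance classes -/

/-- The matrix entries `M y z` depend only on the distance between `y` and `z`. -/
def DistConst {V : Type*} (G : SimpleGraph V) (M : Matrix V V ℝ) : Prop :=
  ∃ m : ℕ → ℝ, ∀ y z, M y z = m (G.dist y z)

/-- The three-term recurrence of a distance-regular graph, with `β`, `γ` the intersection numbers
`b_i`, `c_i` (extended by zero outside their range). At distance `0` the term `m (0 - 1)` is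
harmless because it is multiplied by `γ 0 = 0`. -/
lemma neighbor_sum {V : Type*} [Fintype V] (G : SimpleGraph V) (hconn : G.Connected)
    {k : ℝ} (hk : ∀ y, ∑ w, adjMat G y w = k) (β γ : ℕ → ℝ)
    (hβ : ∀ y z, ∑ w, adjMat G y w * (if G.dist w z = G.dist y z + 1 then 1 else 0)
      = β (G.dist y z))
    (hγ : ∀ y z, ∑ w, adjMat G y w * (if G.dist w z + 1 = G.dist y z then 1 else 0)
      = γ (G.dist y z)) (m : ℕ → ℝ) (y z : V) :
    ∑ w, adjMat G y w * m (G.dist w z) =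
      γ (G.dist y z) * m (G.dist y z - 1) + β (G.dist y z) * m (G.dist y z + 1)
        + (k - β (G.dist y z) - γ (G.dist y z)) * m (G.dist y z) := by
  have key : ∀ w, adjMat G y w * m (G.dist w z) =
      adjMat G y w * m (G.dist y z)
      + adjMat G y w * (if G.dist w z = G.dist y z + 1 then 1 else 0)
        * (m (G.dist y z + 1) - m (G.dist y z))
      + adjMat G y w * (if G.dist w z + 1 = G.dist y z then 1 else 0)
        * (m (G.dist y z - 1) - m (G.dist y z)) := by
    intro w
    by_cases hw : G.Adj y w
    · have h1 := hconn.dist_triangle (u := y) (v := w) (w := z)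
      have h2 := hconn.dist_triangle (u := w) (v := y) (w := z)
      rw [SimpleGraph.dist_eq_one_iff_adj.2 hw] at h1
      rw [SimpleGraph.dist_eq_one_iff_adj.2 hw.symm] at h2
      have h3 : G.dist w z = G.dist y z ∨ G.dist w z = G.dist y z + 1 ∨
        G.dist w z + 1 = G.dist y z := by omega
      rcases h3 with h | h | h
      · simp [h]
      · have : ¬ (G.dist w z + 1 = G.dist y z) := by omega
        rw [if_pos h, if_neg this, h]; ring
      · have h' : ¬ (G.dist w z = G.dist y z + 1) := by omega
        rw [if_pos h, if_neg h', ← h, Nat.add_sub_cancel]; ring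
    · simp [adjMat, hw]
  rw [Finset.sum_congr rfl fun w _ => key w, Finset.sum_add_distrib, Finset.sum_add_distrib,
    ← Finset.sum_mul, ← Finset.sum_mul, ← Finset.sum_mul, hk, hβ, hγ]
  ring

lemma distConst_aeval {V : Type*} [Fintype V] [DecidableEq V] (G : SimpleGraph V)
    (hconn : G.Connected) (hA : ∀ M, DistConst G M → DistConst G (adjMat G * M))
    (p : Polynomial ℝ) : DistConst G (Polynomial.aeval (adjMat G) p) := by
  induction p using Polynomial.induction_on' with
  | add p q hp hq =>
    obtain ⟨m, hm⟩ := hp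
    obtain ⟨m', hm'⟩ := hq
    exact ⟨m + m', fun y z => by simp [hm, hm']⟩
  | monomial n a =>
    have hn : DistConst G (adjMat G ^ n) := by
      induction n with
      | zero =>
        refine ⟨fun i => if i = 0 then 1 else 0, fun y z => ?_⟩
        simp [Matrix.one_apply, hconn.dist_eq_zero_iff]
      | succ n ih =>
        rw [pow_succ']
        exact hA _ ih
    obtain ⟨m, hm⟩ := hn
    refine ⟨fun i => a * m i, fun y z => ?_⟩
    rw [Polynomial.aeval_monomial, ← Algebra.smul_def, Matrix.smul_apply, hm, smul_eq_mul]

/-- A positive semidefinite, distance-constant `θ`-eigenmatrix with positive diagonal, for `θ` one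
of the eigenvalues `θ j` of `G`: a positive multiple of the projection onto the eigenspace. -/
lemma exists_eigenmatrix {V : Type*} [Fintype V] (G : SimpleGraph V)
    (hconn : G.Connected) (hA : ∀ M, DistConst G M → DistConst G (adjMat G * M))
    {n : ℕ} (θ : Fin n → ℝ) (hθ : Function.Injective θ)
    (hspec : {μ : ℝ | HasAdjEigenvalue G μ} = Set.range θ) (i₀ : Fin n) :
    ∃ E : Matrix V V ℝ, ∃ m : ℕ → ℝ, (∀ y z, E y z = m (G.dist y z)) ∧ E.PosSemidef ∧
      adjMat G * E = θ i₀ • E ∧ 0 < m 0 := by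
  classical
  have hH := adjMat_isHermitian G
  let q : Polynomial ℝ := ∏ i ∈ Finset.univ.erase i₀, (Polynomial.X - Polynomial.C (θ i))
  let Q := Polynomial.aeval (adjMat G) q
  have hQQ : Polynomial.aeval (adjMat G) (q * q) = Q * Q := by simp [Q]
  have hQH : Q.IsHermitian := by
    have hp : ∀ p : Polynomial ℝ, (Polynomial.aeval (adjMat G) p).IsHermitian := by
      intro p
      induction p using Polynomial.induction_on' with
      | add p q hp hq => rw [map_add]; exact hp.add hq
      | monomial n a =>
        rw [Polynomial.aeval_monomial, ← Algebra.smul_def]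
        have := hH.pow n
        rw [Matrix.IsHermitian, Matrix.conjTranspose_smul, this.eq]
        simp
    exact hp q
  obtain ⟨m, hm⟩ := distConst_aeval G hconn hA (q * q)
  rw [hQQ] at hm
  have hAQ : adjMat G * Q = θ i₀ • Q := by
    have h0 : Polynomial.aeval (adjMat G) (∏ i, (Polynomial.X - Polynomial.C (θ i))) = 0 := by
      apply matrix_eq_zero_of_mulVec_eigenvectorBasis hH
      intro j
      rw [aeval_mulVec_of_eigenvector (hH.mulVec_eigenvectorBasis j)]
      have hmem : hH.eigenvalues j ∈ Set.range θ := by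
        rw [← hspec]
        refine ⟨_, ?_, hH.mulVec_eigenvectorBasis j⟩
        intro h0
        apply hH.eigenvectorBasis.toBasis.ne_zero j
        ext i
        simpa using congrFun h0 i
      obtain ⟨i, hi⟩ := hmem
      rw [Polynomial.eval_prod, Finset.prod_eq_zero (Finset.mem_univ i) (by simp [hi]), zero_smul]
    rw [← Finset.mul_prod_erase _ _ (Finset.mem_univ i₀), map_mul] at h0
    change _ * Q = 0 at h0
    rw [map_sub, Polynomial.aeval_X, Polynomial.aeval_C, sub_mul, ← Algebra.smul_def] at h0
    exact sub_eq_zero.1 h0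
  have hPS : (Q * Q).PosSemidef := by
    have := Matrix.posSemidef_conjTranspose_mul_self Q
    rwa [hQH.eq] at this
  have hdiag : ∀ y, m 0 = ∑ z, Q z y ^ 2 := by
    intro y
    have := hm y y
    rw [SimpleGraph.dist_self, Matrix.mul_apply] at this
    rw [← this]
    refine Finset.sum_congr rfl fun z _ => ?_
    have := hQH.apply y z
    simp only [star_trivial] at this
    rw [← this]; ring
  refine ⟨Q * Q, m, hm, hPS, by rw [← mul_assoc, hAQ, smul_mul_assoc], ?_⟩
  -- `Q` acts on a `θ i₀`-eigenvector as a nonzero scalar, so it does not vanish.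
  have hQ0 : Q ≠ 0 := by
    intro hQ0
    obtain ⟨v, hv, hAv⟩ : HasAdjEigenvalue G (θ i₀) := by
      have : θ i₀ ∈ {μ : ℝ | HasAdjEigenvalue G μ} := by rw [hspec]; exact ⟨i₀, rfl⟩
      exact this
    have h1 := aeval_mulVec_of_eigenvector hAv q
    change Q *ᵥ v = _ at h1
    rw [hQ0, Matrix.zero_mulVec] at h1
    rcases smul_eq_zero.1 h1.symm with h | h
    · rw [Polynomial.eval_prod, Finset.prod_eq_zero_iff] at h
      obtain ⟨i, hi, h⟩ := h
      simp only [Polynomial.eval_sub, Polynomial.eval_X, Polynomial.eval_C] at h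
      exact (Finset.ne_of_mem_erase hi) (hθ (sub_eq_zero.1 h)).symm
    · exact hv h
  obtain ⟨z, y, hzy⟩ : ∃ z y, Q z y ≠ 0 := by
    by_contra! h
    exact hQ0 (by ext z y; simp [h])
  rw [hdiag y]
  exact Finset.sum_pos' (fun _ _ => sq_nonneg _) ⟨z, Finset.mem_univ _, by positivity⟩

/-! ### The local graph -/

lemma sum_local {V : Type*} [Fintype V] (G : SimpleGraph V) (x : V)
    [Fintype (G.neighborSet x)] (y : G.neighborSet x) :
    ∑ z, adjMat (SimpleGraph.induce (G.neighborSet x) G) y z =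
      ∑ w, adjMat G y w * (if G.dist w x = 1 then 1 else 0) := by
  classical
  have h : ∀ w, adjMat G y w * (if G.dist w x = 1 then 1 else 0) =
      if w ∈ G.neighborSet x then adjMat G y w else 0 := by
    intro w
    have : G.dist w x = 1 ↔ w ∈ G.neighborSet x := by
      rw [SimpleGraph.dist_eq_one_iff_adj, G.adj_comm]; rfl
    simp [this]
  rw [Finset.sum_congr rfl fun w _ => h w, ← Finset.sum_filter]
  exact (Finset.sum_subtype (p := fun w => w ∈ G.neighborSet x)
    (Finset.univ.filter (· ∈ G.neighborSet x)) (by simp) (fun w => adjMat G y w)).symm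

/-- The quadratic form of a distance-constant matrix on vectors supported on the neighbours of a
vertex and orthogonal to the constants. -/
lemma local_form {V : Type*} [Fintype V] (G : SimpleGraph V) (hconn : G.Connected) (x : V)
    [Fintype (G.neighborSet x)] (E : Matrix V V ℝ) (m : ℕ → ℝ)
    (hE : ∀ y z, E y z = m (G.dist y z)) (hPS : E.PosSemidef) {f : G.neighborSet x → ℝ} {μ : ℝ}
    (hf : f ≠ 0)
    (hμ : adjMat (SimpleGraph.induce (G.neighborSet x) G) *ᵥ f = μ • f) (hsum : ∑ y, f y = 0) :
    0 ≤ (m 0 - m 2) + μ * (m 1 - m 2) := by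
  classical
  set L := adjMat (SimpleGraph.induce (G.neighborSet x) G) with hL
  let S : Matrix (G.neighborSet x) (G.neighborSet x) ℝ :=
    E.submatrix (fun y => (y : V)) (fun y => (y : V))
  have hS : S = m 2 • Matrix.of (fun _ _ => 1) + (m 0 - m 2) • 1 + (m 1 - m 2) • L := by
    ext y z
    have hyz : S y z = m (G.dist (y : V) (z : V)) := hE _ _
    rw [hyz]
    by_cases h0 : y = z
    · subst h0
      simp [hL, adjMat]
    · have h0' : (y : V) ≠ z := fun h => h0 (Subtype.ext h)
      by_cases h1 : G.Adj (y : V) z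
      · rw [SimpleGraph.dist_eq_one_iff_adj.2 h1]
        simp [hL, adjMat, h1, h0]
      · have h2 : G.dist (y : V) (z : V) = 2 := by
          have ha := hconn.one_lt_dist_of_ne_of_not_adj h0' h1
          have hb := hconn.dist_triangle (u := (y : V)) (v := x) (w := z)
          have hyx : G.Adj (y : V) x := SimpleGraph.Adj.symm y.2
          have hxz : G.Adj x (z : V) := z.2
          rw [SimpleGraph.dist_eq_one_iff_adj.2 hyx, SimpleGraph.dist_eq_one_iff_adj.2 hxz] at hb
          omega
        rw [h2]
        simp [hL, adjMat, h1, h0]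
  have hJ : (Matrix.of (fun _ _ => 1) : Matrix (G.neighborSet x) (G.neighborSet x) ℝ) *ᵥ f = 0 := by
    ext y
    simp [Matrix.mulVec, dotProduct, hsum]
  have hpos := (hPS.submatrix (fun y : G.neighborSet x => (y : V))).dotProduct_mulVec_nonneg f
  change 0 ≤ star f ⬝ᵥ (S *ᵥ f) at hpos
  rw [hS, Matrix.add_mulVec, Matrix.add_mulVec, Matrix.smul_mulVec, Matrix.smul_mulVec,
    Matrix.smul_mulVec, hJ, hμ, Matrix.one_mulVec, smul_zero, zero_add, smul_smul, ← add_smul,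
    dotProduct_smul, smul_eq_mul] at hpos
  have h2 : 0 < star f ⬝ᵥ f := by
    simpa using dotProduct_star_self_pos_iff.2 hf
  linarith [(mul_nonneg_iff_of_pos_right h2).1 hpos]

/-! ### The eigenvalue bound -/

/-- If `G` is a distance-regular graph of diameter `D ≥ 3` with distinct
adjacency eigenvalues `θ₀ > θ₁ > ⋯ > θ_D` and intersection number `b₁`, then for every
vertex `x` the smallest eigenvalue of the local graph `N_G(x)` is at least
`-b₁/(θ₁ + 1) - 1`. -/
theorem local_graph_eigenvalue_bound
    {V : Type*} [Fintype V] (G : SimpleGraph V) [DecidableRel G.Adj]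
    (D : ℕ) (hD : 3 ≤ D) (hconn : G.Connected) (hdiam : G.diam = D)
    (b c : ℕ → ℕ)
    (hB : ∀ i : ℕ, i ≤ D - 1 → ∀ x y : V, G.dist x y = i →
      {z : V | G.Adj y z ∧ G.dist x z = i + 1}.ncard = b i)
    (hC : ∀ i : ℕ, 1 ≤ i → i ≤ D → ∀ x y : V, G.dist x y = i →
      {z : V | G.Adj y z ∧ G.dist x z = i - 1}.ncard = c i)
    (θ : Fin (D + 1) → ℝ) (hθ : StrictAnti θ)
    (hspec : {μ : ℝ | HasAdjEigenvalue G μ} = Set.range θ) :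
    ∀ x : V, ∀ μ : ℝ,
      HasAdjEigenvalue (SimpleGraph.induce (G.neighborSet x) G) μ →
      -(b 1 : ℝ) / (θ 1 + 1) - 1 ≤ μ := by
  classical
  intro x μ hμ
  have hne : Nonempty V := ⟨x⟩
  have hediam : G.ediam ≠ ⊤ := SimpleGraph.connected_iff_ediam_ne_top.1 hconn
  have hcount : ∀ y (P : V → Prop) [DecidablePred P],
      ∑ w, adjMat G y w * (if P w then 1 else 0) = (({w | G.Adj y w ∧ P w}.ncard : ℕ) : ℝ) := by
    intro y P _
    rw [Set.ncard_eq_toFinset_card', Finset.card_eq_sum_ones, Set.toFinset_ofPred,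
      Finset.sum_filter, Nat.cast_sum]
    refine Finset.sum_congr rfl fun w _ => ?_
    by_cases h1 : G.Adj y w <;> by_cases h2 : P w <;> simp [adjMat, h1, h2]
  have hk : ∀ y, ∑ w, adjMat G y w = (b 0 : ℝ) := by
    intro y
    have h := hcount y (fun w => G.dist y w = 1)
    have h2 := hB 0 (by omega) y y (by simp)
    rw [zero_add] at h2
    rw [h2] at h
    rw [← h]
    refine Finset.sum_congr rfl fun w _ => ?_
    by_cases h1 : G.Adj y w <;> simp [adjMat, h1]
  let β : ℕ → ℝ := fun i => if i ≤ D - 1 then (b i : ℝ) else 0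
  let γ : ℕ → ℝ := fun i => if 1 ≤ i then (c i : ℝ) else 0
  have hβ : ∀ y z, ∑ w, adjMat G y w * (if G.dist w z = G.dist y z + 1 then 1 else 0)
      = β (G.dist y z) := by
    intro y z
    rw [hcount y (fun w => G.dist w z = G.dist y z + 1)]
    by_cases h : G.dist y z ≤ D - 1
    · simp only [β, if_pos h]
      rw [← hB _ h z y G.dist_comm]
      simp only [G.dist_comm (u := z)]
    · simp only [β, if_neg h]
      have : {w | G.Adj y w ∧ G.dist w z = G.dist y z + 1} = ∅ := by
        ext w
        have := SimpleGraph.dist_le_diam hediam (u := w) (v := z)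
        simp only [Set.mem_ofPred_eq, Set.mem_empty_iff_false, iff_false, not_and]
        intro _
        omega
      rw [this]; simp
  have hγ : ∀ y z, ∑ w, adjMat G y w * (if G.dist w z + 1 = G.dist y z then 1 else 0)
      = γ (G.dist y z) := by
    intro y z
    rw [hcount y (fun w => G.dist w z + 1 = G.dist y z)]
    by_cases h : 1 ≤ G.dist y z
    · simp only [γ, if_pos h]
      have hle := SimpleGraph.dist_le_diam hediam (u := y) (v := z)
      rw [← hC _ h (by omega) z y G.dist_comm]
      congr 2
      ext w
      simp only [Set.mem_ofPred_eq, G.dist_comm (u := z)]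
      refine and_congr_right fun _ => ?_
      omega
    · simp only [γ, if_neg h]
      have : {w | G.Adj y w ∧ G.dist w z + 1 = G.dist y z} = ∅ := by
        ext w
        simp only [Set.mem_ofPred_eq, Set.mem_empty_iff_false, iff_false, not_and]
        intro _
        omega
      rw [this]; simp
  have hrec := neighbor_sum G hconn hk β γ hβ hγ
  have hAM : ∀ M, DistConst G M → DistConst G (adjMat G * M) := by
    rintro M ⟨m, hm⟩
    refine ⟨fun i => γ i * m (i - 1) + β i * m (i + 1) + (b 0 - β i - γ i) * m i, fun y z => ?_⟩
    refine Eq.trans ?_ (hrec m y z)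
    rw [Matrix.mul_apply]
    exact Finset.sum_congr rfl fun w _ => by rw [hm]
  obtain ⟨f, hf, hfμ⟩ := hμ
  obtain ⟨y₀, hy₀⟩ : ∃ y, f y ≠ 0 := Function.ne_iff.1 hf
  have hadj₀ : G.Adj (y₀ : V) x := SimpleGraph.Adj.symm y₀.2
  have hβ0 : β 0 = b 0 := by simp [β]
  have hβ1 : β 1 = b 1 := by simp only [β]; rw [if_pos (by omega)]
  have hγ0 : γ 0 = 0 := by simp [γ]
  have hγ1 : γ 1 = 1 := by
    rw [← SimpleGraph.dist_eq_one_iff_adj.2 hadj₀, ← hγ, SimpleGraph.dist_eq_one_iff_adj.2 hadj₀]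
    rw [Finset.sum_eq_single x]
    · simp [adjMat, hadj₀]
    · intro w _ hw
      simp [hconn.dist_eq_zero_iff, hw]
    · simp
  -- The spectral facts `θ₀ = k`, `θ₁ < k` and `θ₁ ≥ 0`.
  have hle : ∀ i, θ i ≤ b 0 := fun i =>
    eigenvalue_le_of_regular G hk (by
      have : θ i ∈ {μ : ℝ | HasAdjEigenvalue G μ} := by rw [hspec]; exact ⟨i, rfl⟩
      exact this)
  have hkev : HasAdjEigenvalue G (b 0 : ℝ) := by
    refine ⟨fun _ => 1, fun h => one_ne_zero (congrFun h x), ?_⟩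
    ext y
    simp [Matrix.mulVec, dotProduct, hk]
  have hrange : ∀ t, HasAdjEigenvalue G t → ∃ i, θ i = t := by
    intro t ht
    have : t ∈ Set.range θ := by rw [← hspec]; exact ht
    exact this
  have hθ0 : θ 0 = b 0 := by
    obtain ⟨i, hi⟩ := hrange _ hkev
    exact le_antisymm (hle 0) (hi ▸ hθ.antitone (Fin.zero_le i))
  obtain ⟨n, rfl⟩ : ∃ n, D = n + 1 := ⟨D - 1, by omega⟩
  have hθ1k : θ 1 < b 0 := by
    rw [← hθ0]
    exact hθ (by simp)
  have hθ1 : 0 ≤ θ 1 := by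
    obtain ⟨u, v, huv⟩ := G.exists_dist_eq_diam
    have hne : u ≠ v := by rintro rfl; simp at huv; omega
    have hnadj : ¬ G.Adj u v := fun h => by
      rw [SimpleGraph.dist_eq_one_iff_adj.2 h] at huv; omega
    obtain ⟨t, ht, htk, ht0⟩ := exists_eigenvalue_nonneg G hconn hk hne hnadj
    obtain ⟨i, rfl⟩ := hrange t ht
    have hi : i ≠ 0 := by rintro rfl; exact htk hθ0
    exact ht0.trans (hθ.antitone (Fin.one_le_of_ne_zero hi))
  -- The local graph is regular of valency `k - 1 - b₁`.
  have hloc : ∀ y : G.neighborSet x,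
      ∑ z, adjMat (SimpleGraph.induce (G.neighborSet x) G) y z = b 0 - b 1 - 1 := by
    intro y
    have hyx : G.Adj (y : V) x := SimpleGraph.Adj.symm y.2
    rw [sum_local, hrec (fun i => if i = 1 then 1 else 0) y x,
      SimpleGraph.dist_eq_one_iff_adj.2 hyx, hβ1, hγ1]
    simp
  have hb1 : (0 : ℝ) ≤ b 1 := Nat.cast_nonneg _
  have hb1' : 0 ≤ (b 1 : ℝ) / (θ 1 + 1) := div_nonneg hb1 (by linarith)
  have hsum : μ * ∑ y, f y = (b 0 - b 1 - 1) * ∑ y, f y := by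
    have h1 : ∑ y, (adjMat (SimpleGraph.induce (G.neighborSet x) G) *ᵥ f) y = μ * ∑ y, f y := by
      rw [hfμ, Finset.mul_sum]; rfl
    rw [← h1, Finset.mul_sum]
    simp only [Matrix.mulVec, dotProduct]
    rw [Finset.sum_comm]
    refine Finset.sum_congr rfl fun z _ => ?_
    rw [← Finset.sum_mul, ← hloc z]
    congr 1
    refine Finset.sum_congr rfl fun y _ => ?_
    simpa using (adjMat_isHermitian (SimpleGraph.induce (G.neighborSet x) G)).apply z y
  by_cases hs : ∑ y, f y = 0
  · obtain ⟨E, m, hE, hPS, hAE, hm0⟩ := exists_eigenmatrix G hconn hAM θ hθ.injective hspec 1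
    have hrecE : ∀ y z, θ 1 * m (G.dist y z) = _ := fun y z => by
      rw [← hE, ← smul_eq_mul, ← Matrix.smul_apply, ← hAE, Matrix.mul_apply,
        Finset.sum_congr rfl fun w _ => by rw [hE w z], hrec m y z]
    have e0 := hrecE x x
    have e1 := hrecE y₀ x
    rw [SimpleGraph.dist_self, hγ0, hβ0] at e0
    rw [SimpleGraph.dist_eq_one_iff_adj.2 hadj₀, hγ1, hβ1] at e1
    have hform := local_form G hconn x E m hE hPS hf hfμ hs
    simp only [Nat.sub_self, zero_add, Nat.reduceAdd] at e0 e1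
    have hkpos : (0 : ℝ) < b 0 := by linarith
    -- Solving the recurrence: `k b₁ (m 0 - m 2) = (k - θ₁)(θ₁ + 1 + b₁) m 0`, and
    -- `k b₁ (m 1 - m 2) = (k - θ₁)(θ₁ + 1) m 0`.
    have g0 : (b 0 : ℝ) * b 1 * (m 0 - m 2) = (b 0 - θ 1) * (θ 1 + 1 + b 1) * m 0 := by
      linear_combination (b 0 : ℝ) * e1 + (-(b 0 : ℝ) + b 1 + 1 + θ 1) * e0
    have g1 : (b 0 : ℝ) * b 1 * (m 1 - m 2) = (b 0 - θ 1) * (θ 1 + 1) * m 0 := by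
      linear_combination (b 0 : ℝ) * e1 + (-(b 0 : ℝ) + 1 + θ 1) * e0
    have hprod : 0 ≤ ((b 0 - θ 1) * m 0) * ((θ 1 + 1 + b 1) + μ * (θ 1 + 1)) := by
      have := mul_nonneg (mul_nonneg hkpos.le hb1) hform
      linear_combination this + g0 + μ * g1
    have hfin := (mul_nonneg_iff_of_pos_left (mul_pos (sub_pos.2 hθ1k) hm0)).1 hprod
    have hθp : 0 < θ 1 + 1 := by linarith
    rw [neg_div, ← sub_nonneg]
    have : μ - (-((b 1 : ℝ) / (θ 1 + 1)) - 1) = ((θ 1 + 1 + b 1) + μ * (θ 1 + 1)) / (θ 1 + 1) := by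
      field_simp
      ring
    rw [this]
    exact div_nonneg hfin hθp.le
  · have hμ' : μ = b 0 - b 1 - 1 := mul_right_cancel₀ hs hsum
    have : 0 ≤ μ := by
      rw [hμ', ← hloc y₀]
      exact Finset.sum_nonneg fun z _ => adjMat_nonneg _ _ _
    rw [neg_div]
    linarith
end
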